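/- arXiv:1707.08827 — 2 statements merged into one kernel-verified Lean document; each statement's English description precedes it below -/
import Mathlib

section
/- For a positive recurrent state j, conditional on the event A_i = {X_0 = i and the chain ever visits j}, the proportion of time spent at j converges almost surely: P(lim_{n→∞} M_j(n)/n = 1/m_j | A_i) = 1. -/
open MeasureTheory ProbabilityTheory Filter Topology
open scoped ENNReal NNReal

variable {S : Type*} [Countable S] [DecidableEq S]

/-- k-step transition probabilities of a transition matrix `P`. -/
noncomputable def kstep (P : S → S → ℝ) : ℕ → S → S → ℝ
  | 0 => fun i j => if i = j then 1 else 0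
  | (k+1) => fun i j => ∑' l, kstep P k i l * P l j

/-- first passage probabilities `f^{(n)}_{ij}` (first visit to `j` at time exactly `n`). -/
noncomputable def fpass (P : S → S → ℝ) (j : S) : ℕ → S → ℝ
  | 0 => fun _ => 0
  | 1 => fun i => P i j
  | (n+2) => fun i => ∑' l, if l = j then 0 else P i l * fpass P j (n+1) l

/-- probability `f_{ij}` of ever reaching `j` from `i`. -/
noncomputable def hitProb (P : S → S → ℝ) (i j : S) : ℝ := ∑' n, fpass P j n i

/-- mean return time `m_j` to `j` (in `ℝ≥0∞`). -/
noncomputable def meanReturn (P : S → S → ℝ) (j : S) : ℝ≥0∞ :=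
  ∑' n : ℕ, (n : ℝ≥0∞) * ENNReal.ofReal (fpass P j n j)

def PositiveRecurrent (P : S → S → ℝ) (j : S) : Prop :=
  hitProb P j j = 1 ∧ meanReturn P j < ⊤

def NullRecurrent (P : S → S → ℝ) (j : S) : Prop :=
  hitProb P j j = 1 ∧ meanReturn P j = ⊤

def Transient (P : S → S → ℝ) (j : S) : Prop := hitProb P j j < 1

/-- `X` is a time-homogeneous Markov chain on `(Ω, μ)` with transition matrix `P`. -/
structure IsMarkovChain {Ω : Type*} [MeasurableSpace Ω] [MeasurableSpace S] (μ : Measure Ω)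
    (X : ℕ → Ω → S) (P : S → S → ℝ) : Prop where
  isProb : IsProbabilityMeasure μ
  meas : ∀ n, Measurable (X n)
  nonneg : ∀ i j, 0 ≤ P i j
  rowSum : ∀ i, ∑' j, P i j = 1
  markov : ∀ n (j : S) (f : ℕ → S),
    μ ({ω | X (n+1) ω = j} ∩ {ω | ∀ m ≤ n, X m ω = f m})
      = ENNReal.ofReal (P (f n) j) * μ {ω | ∀ m ≤ n, X m ω = f m}

/-- `M_j(n)`: number of visits to `j` at times `1,…,n`. -/
noncomputable def visits {Ω : Type*} (X : ℕ → Ω → S) (j : S) (n : ℕ) (ω : Ω) : ℝ :=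
  ∑ k ∈ Finset.Icc 1 n, if X k ω = j then (1:ℝ) else 0

theorem Nat.nth_congr_of_le {p q : ℕ → Prop} {k : ℕ} (h0 : nth p k ≠ 0)
    (h : ∀ m ≤ nth p k, p m ↔ q m) : nth q k = nth p k := by
  classical
  have hp : p (nth p k) := nth_mem_of_ne_zero h0
  have hc : count q (nth p k) = k := by
    refine Eq.trans ?_ (count_nth (lt_card_toFinset_of_nth_ne_zero h0))
    rw [count_eq_card_filter_range, count_eq_card_filter_range]
    exact congrArg _ (Finset.filter_congr fun m hm => (h m (Finset.mem_range.1 hm).le).symm)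
  have := nth_count ((h _ le_rfl).1 hp)
  rwa [hc] at this

theorem Nat.nth_succ_eq_add_iff {p : ℕ → Prop} (hp0 : ¬ p 0) {k d : ℕ} (hk : nth p k ≠ 0)
    (hd : d ≠ 0) :
    nth p (k + 1) = nth p k + d ↔
      p (nth p k + d) ∧ ∀ m, nth p k < m → m < nth p k + d → ¬ p m := by
  classical
  have hpk : p (nth p k) := nth_mem_of_ne_zero hk
  constructor
  · intro h
    refine ⟨h ▸ nth_mem_of_ne_zero (by omega), fun m hm hm' hpm => ?_⟩
    exact absurd (le_nth_of_lt_nth_succ (h ▸ hm') hpm) (by omega)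
  · rintro ⟨hp, hgap⟩
    have hc : nth p (count p (nth p k + d)) = nth p k + d := nth_count hp
    have hle : k + 1 ≤ count p (nth p k + d) := by
      have : count p (nth p k + 1) = k + 1 := by
        rw [count_succ, if_pos hpk, count_nth (lt_card_toFinset_of_nth_ne_zero hk)]
      exact this ▸ count_monotone p (by omega)
    have hk1 : nth p (k + 1) ≠ 0 := nth_ne_zero_anti hp0 hle (by omega)
    rcases hle.eq_or_lt with h | h
    · rw [h, hc]
    · exact absurd (nth_mem_of_ne_zero hk1) (hgap _
        (nth_lt_nth' k.lt_succ_self (lt_card_toFinset_of_nth_ne_zero hk1))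
        (nth_lt_of_lt_count h))

/-- Renewal inversion: the counting function of a set whose `k`-th element is asymptotically `m * k`
is asymptotically `n / m`. -/
theorem Nat.tendsto_count_div_of_tendsto_nth_div {p : ℕ → Prop} [DecidablePred p]
    (hp : ∀ k, nth p k ≠ 0) {m : ℝ} (hm : m ≠ 0)
    (h : Tendsto (fun k : ℕ => (nth p k : ℝ) / k) atTop (𝓝 m)) :
    Tendsto (fun n : ℕ => (count p (n + 1) : ℝ) / n) atTop (𝓝 m⁻¹) := by
  have hinf : (Set.ofPred p).Infinite := fun hf => hp _ (nth_of_card_le hf le_rfl)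
  have hinv : Tendsto (fun k : ℕ => (k : ℝ) / nth p k) atTop (𝓝 m⁻¹) := by
    simpa using h.inv₀ hm
  have hcount : Tendsto (fun n => count p (n + 1)) atTop atTop := by
    refine tendsto_atTop.2 fun b => ?_
    filter_upwards [eventually_ge_atTop (nth p b)] with n hn
    have := count_nth_succ_of_infinite hinf b
    have := count_monotone p (show nth p b + 1 ≤ n + 1 by omega)
    omega
  have hpred : Tendsto (fun n => count p (n + 1) - 1) atTop atTop :=
    (tendsto_sub_atTop_nat 1).comp hcount
  have hratio : Tendsto (fun k : ℕ => ((k : ℝ) + 1) / nth p k) atTop (𝓝 m⁻¹) := by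
    have h1 : Tendsto (fun k : ℕ => (1 : ℝ) / nth p k) atTop (𝓝 0) := by
      have := (tendsto_natCast_atTop_atTop (R := ℝ)).comp (nth_strictMono hinf).tendsto_atTop
      simp_rw [one_div]
      exact this.inv_tendsto_atTop
    simpa [add_div] using hinv.add h1
  refine tendsto_of_tendsto_of_tendsto_of_le_of_le' (hinv.comp hcount) (hratio.comp hpred) ?_ ?_
  · filter_upwards [eventually_gt_atTop 0] with n hn
    have : n < nth p (count p (n + 1)) := le_nth_count hinf (n + 1)
    simp only [Function.comp_apply]
    gcongr
  · filter_upwards [eventually_gt_atTop 0, hcount.eventually_gt_atTop 0] with n hn hc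
    have h1 : nth p (count p (n + 1) - 1) ≤ n :=
      Nat.le_of_lt_succ (nth_lt_of_lt_count (Nat.sub_lt hc one_pos))
    have h2 : ((count p (n + 1) - 1 : ℕ) : ℝ) + 1 = count p (n + 1) := by
      exact_mod_cast Nat.sub_add_cancel hc
    have h3 := Nat.pos_of_ne_zero (hp (count p (n + 1) - 1))
    simp only [Function.comp_apply, h2]
    gcongr

set_option linter.unusedSectionVars false

theorem summable_row {P : S → S → ℝ} (hrow : ∀ i, ∑' j, P i j = 1) (i : S) : Summable (P i) := by
  by_contra h
  simpa [tsum_eq_zero_of_not_summable h] using hrow i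

theorem fpass_mem_Icc {P : S → S → ℝ} (hP : ∀ i j, 0 ≤ P i j) (hrow : ∀ i, ∑' j, P i j = 1)
    (j : S) : ∀ n i, fpass P j n i ∈ Set.Icc (0 : ℝ) 1
  | 0, i => by simp [fpass]
  | 1, i => ⟨hP i j, hrow i ▸ (summable_row hrow i).le_tsum j fun l _ => hP i l⟩
  | n + 2, i => by
    have ih := fpass_mem_Icc hP hrow j (n + 1)
    have h0 : ∀ l, 0 ≤ if l = j then 0 else P i l * fpass P j (n + 1) l := fun l => by
      split_ifs
      exacts [le_rfl, mul_nonneg (hP i l) (ih l).1]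
    have h1 : ∀ l, (if l = j then 0 else P i l * fpass P j (n + 1) l) ≤ P i l := fun l => by
      split_ifs
      exacts [hP i l, mul_le_of_le_one_right (hP i l) (ih l).2]
    have hs := summable_row hrow i
    exact ⟨tsum_nonneg h0, hrow i ▸ (hs.of_nonneg_of_le h0 h1).tsum_le_tsum h1 hs⟩

theorem ofReal_fpass_add_two {P : S → S → ℝ} (hP : ∀ i j, 0 ≤ P i j)
    (hrow : ∀ i, ∑' j, P i j = 1) (j : S) (n : ℕ) (i : S) :
    ENNReal.ofReal (fpass P j (n + 2) i) =
      ∑' l, if l = j then 0 else ENNReal.ofReal (P i l) * ENNReal.ofReal (fpass P j (n + 1) l) := by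
  have ih := fpass_mem_Icc hP hrow j (n + 1)
  have h0 : ∀ l, 0 ≤ if l = j then 0 else P i l * fpass P j (n + 1) l := fun l => by
    split_ifs
    exacts [le_rfl, mul_nonneg (hP i l) (ih l).1]
  have h1 : ∀ l, (if l = j then 0 else P i l * fpass P j (n + 1) l) ≤ P i l := fun l => by
    split_ifs
    exacts [hP i l, mul_le_of_le_one_right (hP i l) (ih l).2]
  rw [fpass, ENNReal.ofReal_tsum_of_nonneg h0 ((summable_row hrow i).of_nonneg_of_le h0 h1)]
  refine tsum_congr fun l => ?_
  split_ifs <;> simp [ENNReal.ofReal_mul (hP i l)]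

/-- Membership in `F` is decided by the path of `X` up to time `n`. -/
def DeterminedUpTo {Ω : Type*} (X : ℕ → Ω → S) (n : ℕ) (F : Set Ω) : Prop :=
  ∀ ω₁ ω₂, (∀ m ≤ n, X m ω₁ = X m ω₂) → ω₁ ∈ F → ω₂ ∈ F

/-- The path of `X` up to time `n`. -/
def pathUpTo {Ω : Type*} (X : ℕ → Ω → S) (n : ℕ) (ω : Ω) : Fin (n + 1) → S := fun m => X m ω

theorem DeterminedUpTo.eq_preimage {Ω : Type*} {X : ℕ → Ω → S} {n : ℕ} {F : Set Ω}
    (hF : DeterminedUpTo X n F) : F = pathUpTo X n ⁻¹' (pathUpTo X n '' F) := by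
  refine (Set.subset_preimage_image _ _).antisymm ?_
  rintro ω' ⟨ω, hω, h⟩
  exact hF ω ω' (fun m hm => congrFun h ⟨m, Nat.lt_succ_of_le hm⟩) hω

/-- The next visit to `j` strictly after time `n` takes place at time `n + d`. -/
def nextVisit {Ω : Type*} (X : ℕ → Ω → S) (j : S) (n d : ℕ) : Set Ω :=
  {ω | X (n + d) ω = j ∧ ∀ m, n < m → m < n + d → X m ω ≠ j}

/-- The time of the visit number `k + 1` to `j` after time `0`, or `0` if there is none. -/
noncomputable def visitTime {Ω : Type*} (X : ℕ → Ω → S) (j : S) (k : ℕ) (ω : Ω) : ℕ :=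
  Nat.nth (fun t => 1 ≤ t ∧ X t ω = j) k

/-- The waiting time between the visits number `k + 1` and `k + 2` to `j`. -/
noncomputable def visitGap {Ω : Type*} (X : ℕ → Ω → S) (j : S) (k : ℕ) (ω : Ω) : ℕ :=
  visitTime X j (k + 1) ω - visitTime X j k ω

theorem visitTime_congr {Ω : Type*} {X : ℕ → Ω → S} {j : S} {k t a : ℕ} {ω ω' : Ω} (ha : a ≤ k)
    (hk : visitTime X j k ω = t) (ht : t ≠ 0) (h : ∀ m ≤ t, X m ω = X m ω') :
    visitTime X j a ω' = visitTime X j a ω := by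
  subst hk
  have hp0 : ¬ (1 ≤ 0 ∧ X 0 ω = j) := by simp
  refine Nat.nth_congr_of_le (Nat.nth_ne_zero_anti hp0 ha ht) fun m hm => ?_
  rw [h m (hm.trans (Nat.nth_le_nth' ha (Nat.lt_card_toFinset_of_nth_ne_zero ht)))]

theorem determinedUpTo_visitTime {Ω : Type*} (X : ℕ → Ω → S) (j : S) (k : ℕ) {t : ℕ} (ht : t ≠ 0) :
    DeterminedUpTo X t {ω | visitTime X j k ω = t} :=
  fun _ _ h hω => (visitTime_congr le_rfl hω ht h).trans hω

theorem determinedUpTo_visitGap_inter {Ω : Type*} (X : ℕ → Ω → S) (j : S) {a k : ℕ} (hak : a < k)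
    (x : ℕ) {t : ℕ} (ht : t ≠ 0) :
    DeterminedUpTo X t ({ω | visitGap X j a ω = x} ∩ {ω | visitTime X j k ω = t}) := by
  rintro ω ω' h ⟨hx, hω⟩
  refine ⟨?_, determinedUpTo_visitTime X j k ht ω ω' h hω⟩
  rw [Set.mem_ofPred_eq, visitGap, visitTime_congr hak hω ht h, visitTime_congr hak.le hω ht h]
  exact hx

theorem visitGap_eq_iff {Ω : Type*} {X : ℕ → Ω → S} {j : S} {k t d : ℕ} {ω : Ω}
    (hk : visitTime X j k ω = t) (ht : t ≠ 0) :
    visitGap X j k ω = d + 1 ↔ ω ∈ nextVisit X j t (d + 1) := by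
  have := Nat.nth_succ_eq_add_iff (p := fun t => 1 ≤ t ∧ X t ω = j) (k := k) (d := d + 1)
    (by simp) (by rwa [← hk] at ht) (by simp)
  change visitTime X j (k + 1) ω = visitTime X j k ω + (d + 1) ↔
    _ ∧ ∀ m, visitTime X j k ω < m → m < visitTime X j k ω + (d + 1) → _ at this
  rw [visitGap, show visitTime X j (k + 1) ω - visitTime X j k ω = d + 1 ↔
    visitTime X j (k + 1) ω = visitTime X j k ω + (d + 1) by omega, this]
  change (1 ≤ visitTime X j k ω + (d + 1) ∧ X (visitTime X j k ω + (d + 1)) ω = j) ∧ _ ↔ _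
  rw [hk]
  simp only [nextVisit, Set.mem_ofPred_eq, not_and]
  refine and_congr (and_iff_right (by omega)) (forall_congr' fun m => ?_)
  exact ⟨fun h h1 h2 => h h1 h2 (by omega), fun h h1 h2 _ => h h1 h2⟩

theorem tsum_ofReal_fpass_succ {P : S → S → ℝ} (hP : ∀ i j, 0 ≤ P i j)
    (hrow : ∀ i, ∑' j, P i j = 1) {j : S} (hj : hitProb P j j = 1) :
    ∑' d, ENNReal.ofReal (fpass P j (d + 1) j) = 1 := by
  have hs : Summable fun n => fpass P j n j := by
    by_contra h
    simp [hitProb, tsum_eq_zero_of_not_summable h] at hj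
  have := ENNReal.ofReal_tsum_of_nonneg (fun n => (fpass_mem_Icc hP hrow j n j).1) hs
  change ENNReal.ofReal (hitProb P j j) = _ at this
  rw [hj, ENNReal.ofReal_one, tsum_eq_zero_add' ENNReal.summable] at this
  simpa [fpass] using this.symm

theorem toReal_meanReturn_ne_zero {P : S → S → ℝ} (hP : ∀ i j, 0 ≤ P i j)
    (hrow : ∀ i, ∑' j, P i j = 1) {j : S} (hj : PositiveRecurrent P j) :
    (meanReturn P j).toReal ≠ 0 := by
  refine (ENNReal.toReal_pos (ne_of_gt ?_) hj.2.ne).ne'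
  calc (0 : ℝ≥0∞) < 1 := one_pos
    _ = ∑' d, ENNReal.ofReal (fpass P j (d + 1) j) := (tsum_ofReal_fpass_succ hP hrow hj.1).symm
    _ ≤ ∑' d, ((d + 1 : ℕ) : ℝ≥0∞) * ENNReal.ofReal (fpass P j (d + 1) j) :=
      ENNReal.tsum_le_tsum fun d => le_mul_of_one_le_left' (by simp)
    _ ≤ meanReturn P j := ENNReal.tsum_comp_le_tsum_of_injective Nat.succ_injective
      fun n : ℕ => (n : ℝ≥0∞) * ENNReal.ofReal (fpass P j n j)

theorem visits_eq_count {Ω : Type*} (X : ℕ → Ω → S) (j : S) (n : ℕ) (ω : Ω) :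
    visits X j n ω = Nat.count (fun t => 1 ≤ t ∧ X t ω = j) (n + 1) := by
  rw [visits, Finset.sum_boole, Nat.count_eq_card_filter_range]
  congr 2
  ext t
  simp only [Finset.mem_filter, Finset.mem_Icc, Finset.mem_range, Nat.lt_succ_iff]
  tauto

namespace IsMarkovChain

variable {Ω : Type*} [MeasurableSpace Ω] [MeasurableSpace S] [MeasurableSingletonClass S]
  {μ : Measure Ω} {X : ℕ → Ω → S} {P : S → S → ℝ}

theorem measurableSet_eq (hX : IsMarkovChain μ X P) (n : ℕ) (x : S) :
    MeasurableSet {ω | X n ω = x} :=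
  hX.meas n (measurableSet_singleton x)

theorem measurable_pathUpTo (hX : IsMarkovChain μ X P) (n : ℕ) : Measurable (pathUpTo X n) :=
  measurable_pi_lambda _ fun m => hX.meas m

theorem measurableSet_of_determinedUpTo (hX : IsMarkovChain μ X P) {n : ℕ} {F : Set Ω}
    (hF : DeterminedUpTo X n F) : MeasurableSet F := by
  rw [hF.eq_preimage]
  exact hX.measurable_pathUpTo n (Set.to_countable _).measurableSet

theorem measure_inter_succ_eq (hX : IsMarkovChain μ X P) {n : ℕ} {F : Set Ω}
    (hF : DeterminedUpTo X n F) {x : S} (hx : F ⊆ {ω | X n ω = x}) (y : S) :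
    μ (F ∩ {ω | X (n + 1) ω = y}) = ENNReal.ofReal (P x y) * μ F := by
  have hlaw : (μ.restrict ({ω | X n ω = x} ∩ {ω | X (n + 1) ω = y})).map (pathUpTo X n) =
      (ENNReal.ofReal (P x y) • μ.restrict {ω | X n ω = x}).map (pathUpTo X n) := by
    refine Measure.ext_of_singleton fun g => ?_
    have hg : MeasurableSet (pathUpTo X n ⁻¹' {g}) :=
      hX.measurable_pathUpTo n (measurableSet_singleton g)
    rw [Measure.map_apply (hX.measurable_pathUpTo n) (measurableSet_singleton g),
      Measure.map_apply (hX.measurable_pathUpTo n) (measurableSet_singleton g),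
      Measure.smul_apply, Measure.restrict_apply hg, Measure.restrict_apply hg, smul_eq_mul]
    by_cases hgx : g (Fin.last n) = x
    · let f : ℕ → S := fun m => if h : m < n + 1 then g ⟨m, h⟩ else x
      have hf : pathUpTo X n ⁻¹' {g} = {ω | ∀ m ≤ n, X m ω = f m} := by
        ext ω
        simp only [Set.mem_preimage, Set.mem_singleton_iff, funext_iff, Set.mem_ofPred_eq]
        constructor
        · intro h m hm
          simpa [f, hm, pathUpTo] using h ⟨m, Nat.lt_succ_of_le hm⟩
        · intro h m
          simpa [f, pathUpTo, Nat.le_of_lt_succ m.2] using h m (Nat.le_of_lt_succ m.2)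
      have hfn : f n = x := (dif_pos n.lt_succ_self).trans hgx
      have hsub : pathUpTo X n ⁻¹' {g} ∩ {ω | X n ω = x} = pathUpTo X n ⁻¹' {g} := by
        rw [Set.inter_eq_left, hf]
        exact fun ω hω => (hω n le_rfl).trans hfn
      rw [← Set.inter_assoc, hsub, hf, Set.inter_comm, hX.markov, hfn]
    · have : pathUpTo X n ⁻¹' {g} ∩ {ω | X n ω = x} = ∅ := by
        ext ω
        simp only [Set.mem_inter_iff, Set.mem_preimage, Set.mem_singleton_iff, Set.mem_ofPred_eq,
          Set.mem_empty_iff_false, iff_false, not_and]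
        rintro rfl
        exact hgx
      simp [← Set.inter_assoc, this]
  have := congrArg (fun ν => ν (pathUpTo X n '' F)) hlaw
  have hFm := hX.measurableSet_of_determinedUpTo hF
  simp only [Measure.map_apply (hX.measurable_pathUpTo n) (Set.to_countable _).measurableSet,
    ← hF.eq_preimage, Measure.smul_apply, Measure.restrict_apply hFm, smul_eq_mul,
    ← Set.inter_assoc, Set.inter_eq_left.2 hx] at this
  exact this

theorem measure_inter_nextVisit (hX : IsMarkovChain μ X P) (j : S) (d : ℕ) :
    ∀ {n : ℕ} {F : Set Ω}, DeterminedUpTo X n F → ∀ {x : S}, F ⊆ {ω | X n ω = x} →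
      μ (F ∩ nextVisit X j n (d + 1)) = ENNReal.ofReal (fpass P j (d + 1) x) * μ F := by
  induction d with
  | zero =>
    intro n F hF x hx
    have : nextVisit X j n (0 + 1) = {ω | X (n + 1) ω = j} := by
      ext ω
      simp only [nextVisit, Set.mem_ofPred_eq, zero_add, and_iff_left_iff_imp]
      intros
      omega
    rw [this, hX.measure_inter_succ_eq hF hx]
    rfl
  | succ d ih =>
    intro n F hF x hx
    have hsplit : ∀ l, F ∩ nextVisit X j n (d + 2) ∩ {ω | X (n + 1) ω = l} =
        if l = j then ∅ else F ∩ {ω | X (n + 1) ω = l} ∩ nextVisit X j (n + 1) (d + 1) := by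
      intro l
      split_ifs with h
      · subst h
        ext ω
        simp only [nextVisit, Set.mem_inter_iff, Set.mem_ofPred_eq, Set.mem_empty_iff_false,
          iff_false, not_and]
        rintro ⟨-, -, h2⟩
        exact h2 _ (by omega) (by omega)
      · ext ω
        simp only [nextVisit, Set.mem_inter_iff, Set.mem_ofPred_eq,
          show n + 1 + (d + 1) = n + (d + 2) by ring]
        constructor
        · rintro ⟨⟨h1, h2, h3⟩, h4⟩
          exact ⟨⟨h1, h4⟩, h2, fun m hm => h3 m (by omega)⟩
        · rintro ⟨⟨h1, h4⟩, h2, h3⟩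
          refine ⟨⟨h1, h2, fun m hm hm' => ?_⟩, h4⟩
          rcases eq_or_lt_of_le (Nat.succ_le_of_lt hm) with rfl | hm
          · rwa [h4]
          · exact h3 m hm hm'
    have hdet : ∀ l, DeterminedUpTo X (n + 1) (F ∩ {ω | X (n + 1) ω = l}) :=
      fun l ω ω' h hω => ⟨hF ω ω' (fun m hm => h m (by omega)) hω.1,
        (h _ le_rfl).symm.trans hω.2⟩
    have htsum := tsum_measure_preimage_singleton (μ := μ.restrict (F ∩ nextVisit X j n (d + 2)))
      (Set.to_countable (Set.univ : Set S)) (f := X (n + 1))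
      (fun y _ => hX.measurableSet_eq (n + 1) y)
    rw [tsum_univ (fun l => μ.restrict (F ∩ nextVisit X j n (d + 2)) (X (n + 1) ⁻¹' {l})),
      Set.preimage_univ, Measure.restrict_apply_univ] at htsum
    rw [show d + 1 + 1 = d + 2 from rfl, ← htsum,
      ofReal_fpass_add_two hX.nonneg hX.rowSum, ← ENNReal.tsum_mul_right]
    refine tsum_congr fun l => ?_
    have hl : X (n + 1) ⁻¹' {l} = {ω | X (n + 1) ω = l} := rfl
    rw [hl, Measure.restrict_apply (hX.measurableSet_eq (n + 1) l), Set.inter_comm, hsplit]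
    split_ifs with h
    · simp
    · rw [ih (hdet l) Set.inter_subset_right, hX.measure_inter_succ_eq hF hx]
      ring

theorem measurable_visitTime (hX : IsMarkovChain μ X P) (j : S) (k : ℕ) :
    Measurable (visitTime X j k) := by
  have hpos : ∀ t, t ≠ 0 → MeasurableSet {ω | visitTime X j k ω = t} := fun t ht =>
    hX.measurableSet_of_determinedUpTo (determinedUpTo_visitTime X j k ht)
  refine measurable_to_countable' fun t => ?_
  rcases eq_or_ne t 0 with rfl | ht
  · have : visitTime X j k ⁻¹' {0} = (⋃ t : ℕ, {ω | visitTime X j k ω = t + 1})ᶜ := by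
      ext ω
      simp only [Set.mem_preimage, Set.mem_singleton_iff, Set.mem_compl_iff, Set.mem_iUnion,
        Set.mem_ofPred_eq, not_exists]
      exact ⟨fun h t => by omega, fun h => by
        by_contra h0
        exact h (visitTime X j k ω - 1) (by omega)⟩
    rw [this]
    exact (MeasurableSet.iUnion fun t => hpos _ t.succ_ne_zero).compl
  · exact hpos t ht

theorem measurable_visitGap (hX : IsMarkovChain μ X P) (j : S) (k : ℕ) :
    Measurable (visitGap X j k) :=
  (hX.measurable_visitTime j (k + 1)).sub (hX.measurable_visitTime j k)

theorem measurableSet_visitTime_ne_zero (hX : IsMarkovChain μ X P) (j : S) (k : ℕ) :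
    MeasurableSet {ω | visitTime X j k ω ≠ 0} :=
  (hX.measurable_visitTime j k (measurableSet_singleton 0)).compl

theorem measure_inter_visitGap_succ (hX : IsMarkovChain μ X P) (j : S) {k : ℕ} {H : Set Ω}
    (hH : ∀ t ≠ 0, DeterminedUpTo X t (H ∩ {ω | visitTime X j k ω = t})) (d : ℕ) :
    μ (H ∩ {ω | visitTime X j k ω ≠ 0} ∩ {ω | visitGap X j k ω = d + 1}) =
      ENNReal.ofReal (fpass P j (d + 1) j) * μ (H ∩ {ω | visitTime X j k ω ≠ 0}) := by
  have hunion : H ∩ {ω | visitTime X j k ω ≠ 0} =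
      ⋃ t : ℕ, H ∩ {ω | visitTime X j k ω = t + 1} := by
    ext ω
    simp only [Set.mem_inter_iff, Set.mem_ofPred_eq, Set.mem_iUnion, exists_and_left]
    exact and_congr_right fun _ => ⟨Nat.exists_eq_succ_of_ne_zero, fun ⟨t, ht⟩ => by omega⟩
  have hdisj : Pairwise
      (Function.onFun Disjoint fun t : ℕ => H ∩ {ω | visitTime X j k ω = t + 1}) := by
    intro s t hst
    refine Set.disjoint_left.2 fun ω h1 h2 => hst ?_
    have := h1.2.symm.trans h2.2
    omega
  have hmeas : ∀ t : ℕ, MeasurableSet (H ∩ {ω | visitTime X j k ω = t + 1}) := fun t =>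
    hX.measurableSet_of_determinedUpTo (hH _ t.succ_ne_zero)
  rw [← Measure.restrict_apply (hunion ▸ MeasurableSet.iUnion hmeas), hunion,
    measure_iUnion hdisj hmeas, measure_iUnion hdisj hmeas, ← ENNReal.tsum_mul_left]
  refine tsum_congr fun t => ?_
  rw [Measure.restrict_apply (hmeas t)]
  have hgap : H ∩ {ω | visitTime X j k ω = t + 1} ∩ {ω | visitGap X j k ω = d + 1} =
      H ∩ {ω | visitTime X j k ω = t + 1} ∩ nextVisit X j (t + 1) (d + 1) := by
    ext ω
    exact and_congr_right fun hω => visitGap_eq_iff hω.2 t.succ_ne_zero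
  rw [hgap]
  refine hX.measure_inter_nextVisit j d (hH _ t.succ_ne_zero) fun ω hω => ?_
  have h0 : visitTime X j k ω ≠ 0 := hω.2 ▸ t.succ_ne_zero
  have : X (visitTime X j k ω) ω = j := (Nat.nth_mem_of_ne_zero h0).2
  rwa [hω.2] at this

theorem measure_inter_visitGap_zero (hX : IsMarkovChain μ X P) {j : S} (hj : hitProb P j j = 1)
    (k : ℕ) : μ ({ω | visitTime X j k ω ≠ 0} ∩ {ω | visitGap X j k ω = 0}) = 0 := by
  have := hX.isProb
  have hG : ∀ d, MeasurableSet {ω | visitGap X j k ω = d} := fun d =>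
    hX.measurable_visitGap j k (measurableSet_singleton d)
  have htsum := tsum_measure_preimage_singleton (μ := μ.restrict {ω | visitTime X j k ω ≠ 0})
    (Set.to_countable (Set.univ : Set ℕ)) (f := visitGap X j k) (fun d _ => hG d)
  rw [tsum_univ (fun d => μ.restrict {ω | visitTime X j k ω ≠ 0} (visitGap X j k ⁻¹' {d})),
    Set.preimage_univ, Measure.restrict_apply_univ, tsum_eq_zero_add' ENNReal.summable] at htsum
  have hsucc : ∀ d, μ.restrict {ω | visitTime X j k ω ≠ 0} (visitGap X j k ⁻¹' {d + 1}) =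
      ENNReal.ofReal (fpass P j (d + 1) j) * μ {ω | visitTime X j k ω ≠ 0} := by
    intro d
    have := hX.measure_inter_visitGap_succ j (k := k) (H := Set.univ)
      (fun t ht => by simpa using determinedUpTo_visitTime X j k ht) d
    rw [Set.univ_inter] at this
    rw [← this, Set.inter_comm]
    exact Measure.restrict_apply (hG (d + 1))
  simp_rw [hsucc] at htsum
  rw [ENNReal.tsum_mul_right, tsum_ofReal_fpass_succ hX.nonneg hX.rowSum hj, one_mul] at htsum
  have h0 := (ENNReal.add_left_inj (measure_ne_top μ _)).1 (htsum.trans (zero_add _).symm)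
  rw [Set.inter_comm]
  exact (Measure.restrict_apply (hG 0)).symm.trans h0

theorem ae_visitTime_ne_zero (hX : IsMarkovChain μ X P) {j : S} (hj : hitProb P j j = 1) :
    ∀ᵐ ω ∂μ, visitTime X j 0 ω ≠ 0 → ∀ k, visitTime X j k ω ≠ 0 := by
  have hgap : ∀ᵐ ω ∂μ, ∀ k, ¬ (visitTime X j k ω ≠ 0 ∧ visitGap X j k ω = 0) :=
    ae_all_iff.2 fun k => by
      rw [ae_iff]
      simp only [not_not]
      exact hX.measure_inter_visitGap_zero hj k
  filter_upwards [hgap] with ω hω h0 k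
  induction k with
  | zero => exact h0
  | succ k ih =>
    have := hω k
    simp only [visitGap] at this
    omega

theorem measure_visitTime_zero_inter_visitGap (hX : IsMarkovChain μ X P) {j : S}
    (hj : hitProb P j j = 1) {k : ℕ} {H : Set Ω}
    (hH : ∀ t ≠ 0, DeterminedUpTo X t (H ∩ {ω | visitTime X j k ω = t})) (d : ℕ) :
    μ ({ω | visitTime X j 0 ω ≠ 0} ∩ (H ∩ {ω | visitGap X j k ω = d})) =
      ENNReal.ofReal (fpass P j d j) * μ ({ω | visitTime X j 0 ω ≠ 0} ∩ H) := by
  have hR : ∀ G : Set Ω, μ ({ω | visitTime X j 0 ω ≠ 0} ∩ G) =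
      μ ({ω | visitTime X j k ω ≠ 0} ∩ G) := fun G => measure_congr <| by
    filter_upwards [hX.ae_visitTime_ne_zero hj] with ω hω
    exact propext (and_congr_left fun _ =>
      ⟨fun h => hω h k, Nat.nth_ne_zero_anti (by simp) k.zero_le⟩)
  rw [hR, hR, ← Set.inter_assoc, Set.inter_comm _ H]
  cases d with
  | zero =>
    rw [Set.inter_assoc, measure_mono_null Set.inter_subset_right
      (hX.measure_inter_visitGap_zero hj k)]
    simp [fpass]
  | succ d => exact hX.measure_inter_visitGap_succ j hH d

theorem cond_inter_visitGap (hX : IsMarkovChain μ X P) {j : S} (hj : hitProb P j j = 1) {k : ℕ}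
    {H : Set Ω} (hH : ∀ t ≠ 0, DeterminedUpTo X t (H ∩ {ω | visitTime X j k ω = t})) (d : ℕ) :
    μ[|{ω | visitTime X j 0 ω ≠ 0}] (H ∩ {ω | visitGap X j k ω = d}) =
      ENNReal.ofReal (fpass P j d j) * μ[|{ω | visitTime X j 0 ω ≠ 0}] H := by
  rw [cond_apply (hX.measurableSet_visitTime_ne_zero j 0),
    cond_apply (hX.measurableSet_visitTime_ne_zero j 0),
    hX.measure_visitTime_zero_inter_visitGap hj hH, mul_left_comm]

theorem cond_visitGap_eq (hX : IsMarkovChain μ X P) {j : S} (hj : hitProb P j j = 1)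
    (hR : μ {ω | visitTime X j 0 ω ≠ 0} ≠ 0) (k d : ℕ) :
    μ[|{ω | visitTime X j 0 ω ≠ 0}] {ω | visitGap X j k ω = d} =
      ENNReal.ofReal (fpass P j d j) := by
  have := hX.isProb
  have := cond_isProbabilityMeasure hR
  simpa using hX.cond_inter_visitGap hj (k := k) (H := Set.univ)
    (fun t ht => by simpa using determinedUpTo_visitTime X j k ht) d

theorem identDistrib_visitGap (hX : IsMarkovChain μ X P) {j : S} (hj : hitProb P j j = 1)
    (hR : μ {ω | visitTime X j 0 ω ≠ 0} ≠ 0) (k l : ℕ) :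
    IdentDistrib (visitGap X j k) (visitGap X j l) μ[|{ω | visitTime X j 0 ω ≠ 0}]
      μ[|{ω | visitTime X j 0 ω ≠ 0}] := by
  refine ⟨(hX.measurable_visitGap j k).aemeasurable, (hX.measurable_visitGap j l).aemeasurable,
    Measure.ext_of_singleton fun d => ?_⟩
  rw [Measure.map_apply (hX.measurable_visitGap j k) (measurableSet_singleton d),
    Measure.map_apply (hX.measurable_visitGap j l) (measurableSet_singleton d)]
  exact (hX.cond_visitGap_eq hj hR k d).trans (hX.cond_visitGap_eq hj hR l d).symm

theorem pairwise_indepFun_visitGap (hX : IsMarkovChain μ X P) {j : S} (hj : hitProb P j j = 1)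
    (hR : μ {ω | visitTime X j 0 ω ≠ 0} ≠ 0) :
    Pairwise fun k l =>
      IndepFun (visitGap X j k) (visitGap X j l) μ[|{ω | visitTime X j 0 ω ≠ 0}] := by
  have := hX.isProb
  have := cond_isProbabilityMeasure hR
  have hlt : ∀ k l, k < l →
      IndepFun (visitGap X j k) (visitGap X j l) μ[|{ω | visitTime X j 0 ω ≠ 0}] := by
    intro k l hkl
    have hk := hX.measurable_visitGap j k
    have hl := hX.measurable_visitGap j l
    rw [indepFun_iff_map_prod_eq_prod_map_map hk.aemeasurable hl.aemeasurable]
    refine Measure.ext_of_singleton fun ⟨c, d⟩ => ?_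
    rw [← Set.singleton_prod_singleton, Measure.prod_prod,
      Measure.map_apply (hk.prodMk hl)
        ((measurableSet_singleton c).prod (measurableSet_singleton d)),
      Measure.map_apply hk (measurableSet_singleton c),
      Measure.map_apply hl (measurableSet_singleton d), Set.mk_preimage_prod]
    refine (hX.cond_inter_visitGap hj (k := l) (H := {ω | visitGap X j k ω = c})
      (fun t ht => determinedUpTo_visitGap_inter X j hkl c ht) d).trans ?_
    rw [← hX.cond_visitGap_eq hj hR l d, mul_comm]
    rfl
  intro k l hkl
  rcases hkl.lt_or_gt with h | h
  exacts [hlt k l h, (hlt l k h).symm]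

theorem lintegral_visitGap (hX : IsMarkovChain μ X P) {j : S} (hj : hitProb P j j = 1)
    (hR : μ {ω | visitTime X j 0 ω ≠ 0} ≠ 0) (k : ℕ) :
    ∫⁻ ω, (visitGap X j k ω : ℝ≥0∞) ∂μ[|{ω | visitTime X j 0 ω ≠ 0}] = meanReturn P j := by
  have hk := hX.measurable_visitGap j k
  rw [← lintegral_map (f := fun n : ℕ => (n : ℝ≥0∞)) (measurable_of_countable _) hk,
    lintegral_countable', meanReturn]
  refine tsum_congr fun d => ?_
  rw [Measure.map_apply hk (measurableSet_singleton d), ← hX.cond_visitGap_eq hj hR k d]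
  rfl

theorem ae_tendsto_visitTime_div (hX : IsMarkovChain μ X P) {j : S} (hj : PositiveRecurrent P j) :
    ∀ᵐ ω ∂μ, visitTime X j 0 ω ≠ 0 →
      Tendsto (fun k : ℕ => (visitTime X j k ω : ℝ) / k) atTop (𝓝 (meanReturn P j).toReal) := by
  have := hX.isProb
  by_cases hR : μ {ω | visitTime X j 0 ω ≠ 0} = 0
  · filter_upwards [measure_eq_zero_iff_ae_notMem.1 hR] with ω hω h using absurd h hω
  set Q := μ[|{ω | visitTime X j 0 ω ≠ 0}] with hQ
  have hint := hX.lintegral_visitGap hj.1 hR 0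
  have hmeas : ∀ k, Measurable fun ω => (visitGap X j k ω : ℝ) := fun k =>
    measurable_from_top.comp (hX.measurable_visitGap j k)
  have hlint : ∫⁻ ω, ENNReal.ofReal (visitGap X j 0 ω : ℝ) ∂Q = meanReturn P j := by
    simpa only [ENNReal.ofReal_natCast] using hint
  have hintegrable : Integrable (fun ω => (visitGap X j 0 ω : ℝ)) Q := by
    refine ⟨(hmeas 0).aestronglyMeasurable, ?_⟩
    rw [hasFiniteIntegral_iff_ofReal (ae_of_all _ fun ω => Nat.cast_nonneg _), hlint]
    exact hj.2
  have hmean : ∫ ω, (visitGap X j 0 ω : ℝ) ∂Q = (meanReturn P j).toReal := by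
    rw [integral_eq_lintegral_of_nonneg_ae (ae_of_all _ fun ω => Nat.cast_nonneg _)
      (hmeas 0).aestronglyMeasurable, hlint]
  have hlaw := strong_law_ae_real (fun k ω => (visitGap X j k ω : ℝ)) hintegrable
    (fun k l hkl => (hX.pairwise_indepFun_visitGap hj.1 hR hkl).comp
      (measurable_from_top (f := ((↑) : ℕ → ℝ))) (measurable_from_top (f := ((↑) : ℕ → ℝ))))
    (fun k => (hX.identDistrib_visitGap hj.1 hR k 0).comp
      (measurable_from_top (f := ((↑) : ℕ → ℝ))))
  rw [hmean, hQ, ProbabilityTheory.cond,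
    Measure.ae_ennreal_smul_measure_eq (ENNReal.inv_ne_zero.2 (measure_ne_top μ _)),
    ae_restrict_iff' (hX.measurableSet_visitTime_ne_zero j 0)] at hlaw
  filter_upwards [hlaw, hX.ae_visitTime_ne_zero hj.1] with ω hlim hne h0
  have hmono : ∀ k, visitTime X j k ω ≤ visitTime X j (k + 1) ω := fun k =>
    Nat.nth_le_nth' k.le_succ (Nat.lt_card_toFinset_of_nth_ne_zero (hne h0 (k + 1)))
  have hsum : ∀ k, (visitTime X j k ω : ℝ) =
      visitTime X j 0 ω + ∑ l ∈ Finset.range k, (visitGap X j l ω : ℝ) := fun k => by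
    simp only [visitGap, Nat.cast_sub (hmono _)]
    rw [Finset.sum_range_sub fun l => (visitTime X j l ω : ℝ)]
    ring
  have := (tendsto_const_div_atTop_nhds_zero_nat (visitTime X j 0 ω : ℝ)).add (hlim h0)
  rw [zero_add] at this
  exact this.congr fun k => by rw [hsum k, add_div]

/-- The ergodic theorem for the occupation time of a positive recurrent state, for a chain whose
state space carries a `σ`-algebra containing the singletons. -/
theorem ae_tendsto_visits_div (hX : IsMarkovChain μ X P) {j : S} (hj : PositiveRecurrent P j) :
    ∀ᵐ ω ∂μ, (∃ n ≥ 1, X n ω = j) →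
      Tendsto (fun n : ℕ => visits X j n ω / n) atTop (𝓝 (meanReturn P j).toReal⁻¹) := by
  filter_upwards [hX.ae_tendsto_visitTime_div hj, hX.ae_visitTime_ne_zero hj.1]
    with ω hlim hne ⟨n, hn, hnj⟩
  have h0 : visitTime X j 0 ω ≠ 0 := by
    have hex : ∃ t, 1 ≤ t ∧ X t ω = j := ⟨n, hn, hnj⟩
    rw [visitTime, Nat.nth_zero_of_exists hex]
    exact Nat.one_le_iff_ne_zero.1 (Nat.find_spec hex).1
  simp only [visits_eq_count]
  exact Nat.tendsto_count_div_of_tendsto_nth_div (hne h0)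
    (toReal_meanReturn_ne_zero hX.nonneg hX.rowSum hj) (hlim h0)

end IsMarkovChain

/-- If `μ` splits additively along `C` on `E`, then `C` is measurable for the trace of `μ` on `E`,
even if neither `C` nor `E` is measurable. -/
theorem isCaratheodory_restrict_of_add_le {Ω : Type*} [MeasurableSpace Ω] {μ : Measure Ω}
    [IsFiniteMeasure μ] {E C : Set Ω} (h : μ (E ∩ C) + μ (E \ C) ≤ μ E) :
    (OuterMeasure.restrict E μ.toOuterMeasure).IsCaratheodory C := by
  set A := toMeasurable μ (E ∩ C)
  set B := toMeasurable μ (E \ C)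
  have hA : E ∩ C ⊆ A := subset_toMeasurable _ _
  have hB : E \ C ⊆ B := subset_toMeasurable _ _
  have hAm : MeasurableSet A := measurableSet_toMeasurable _ _
  have hAB : μ (A ∩ B) = 0 := by
    have hE : E ⊆ A ∪ B := fun ω hω => by
      by_cases hC : ω ∈ C
      exacts [Or.inl (hA ⟨hω, hC⟩), Or.inr (hB ⟨hω, hC⟩)]
    have hsum : μ (A ∪ B) + μ (A ∩ B) ≤ μ (A ∪ B) + 0 := by
      rw [measure_union_add_inter' hAm, measure_toMeasurable, measure_toMeasurable, add_zero]
      exact h.trans (measure_mono hE)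
    exact nonpos_iff_eq_zero.1 ((ENNReal.add_le_add_iff_left (measure_ne_top μ _)).1 hsum)
  refine (OuterMeasure.isCaratheodory_iff_le' _).2 fun t => ?_
  simp only [OuterMeasure.restrict_apply, Measure.coe_toOuterMeasure]
  calc μ (t ∩ C ∩ E) + μ (t \ C ∩ E)
      ≤ μ (t ∩ E ∩ A) + μ ((t ∩ E) \ A ∪ A ∩ B) := by
        refine add_le_add (measure_mono ?_) (measure_mono ?_)
        · exact fun ω hω => ⟨⟨hω.1.1, hω.2⟩, hA ⟨hω.2, hω.1.2⟩⟩
        · intro ω hω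
          by_cases hωA : ω ∈ A
          exacts [Or.inr ⟨hωA, hB ⟨hω.2, hω.1.2⟩⟩, Or.inl ⟨⟨hω.1.1, hω.2⟩, hωA⟩]
    _ ≤ μ (t ∩ E ∩ A) + (μ ((t ∩ E) \ A) + μ (A ∩ B)) := by
        gcongr
        exact measure_union_le _ _
    _ = μ (t ∩ E) := by rw [hAB, add_zero, measure_inter_add_sdiff _ hAm]

theorem IsMarkovChain.measure_path_inter_add_sdiff_le {Ω : Type*} [MeasurableSpace Ω]
    [MeasurableSpace S] {μ : Measure Ω} {X : ℕ → Ω → S} {P : S → S → ℝ}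
    (hX : IsMarkovChain μ X P) (n : ℕ) (f : ℕ → S) (s : S) :
    μ ({ω | ∀ m ≤ n, X m ω = f m} ∩ {ω | X (n + 1) ω = s}) +
      μ ({ω | ∀ m ≤ n, X m ω = f m} \ {ω | X (n + 1) ω = s}) ≤
        μ {ω | ∀ m ≤ n, X m ω = f m} := by
  set C := {ω | ∀ m ≤ n, X m ω = f m}
  have hcover : C \ {ω | X (n + 1) ω = s} ⊆
      ⋃ y : S, if y = s then ∅ else {ω | X (n + 1) ω = y} ∩ C := by
    rintro ω ⟨hC, hs⟩
    refine Set.mem_iUnion.2 ⟨X (n + 1) ω, ?_⟩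
    rw [if_neg (show X (n + 1) ω ≠ s from hs)]
    exact ⟨rfl, hC⟩
  have hrow : ∑' y, ENNReal.ofReal (P (f n) y) = 1 := by
    rw [← ENNReal.ofReal_tsum_of_nonneg (hX.nonneg _) (summable_row hX.rowSum _), hX.rowSum,
      ENNReal.ofReal_one]
  have hdiff : μ (C \ {ω | X (n + 1) ω = s}) ≤
      ∑' y, if y = s then 0 else ENNReal.ofReal (P (f n) y) * μ C := by
    refine (measure_mono hcover).trans ((measure_iUnion_le _).trans_eq ?_)
    refine tsum_congr fun y => ?_
    split_ifs
    exacts [measure_empty, hX.markov n y f]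
  calc μ (C ∩ {ω | X (n + 1) ω = s}) + μ (C \ {ω | X (n + 1) ω = s})
      ≤ ENNReal.ofReal (P (f n) s) * μ C +
        ∑' y, if y = s then 0 else ENNReal.ofReal (P (f n) y) * μ C := by
        rw [Set.inter_comm, hX.markov]
        gcongr
    _ = ∑' y, ENNReal.ofReal (P (f n) y) * μ C := by
        convert (ENNReal.tsum_eq_add_tsum_ite
          (f := fun y => ENNReal.ofReal (P (f n) y) * μ C) s).symm
    _ = μ C := by rw [ENNReal.tsum_mul_right, hrow, one_mul]

theorem IsMarkovChain.measure_inter_path_add_sdiff_le {Ω : Type*} [MeasurableSpace Ω]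
    [MeasurableSpace S] {μ : Measure Ω} {X : ℕ → Ω → S} {P : S → S → ℝ}
    (hX : IsMarkovChain μ X P) (i : S) (n : ℕ) (f : ℕ → S) :
    μ ({ω | X 0 ω = i} ∩ {ω | ∀ m ≤ n, X m ω = f m}) +
      μ ({ω | X 0 ω = i} \ {ω | ∀ m ≤ n, X m ω = f m}) ≤ μ {ω | X 0 ω = i} := by
  by_cases hf : f 0 = i
  · subst hf
    induction n with
    | zero => simp
    | succ n ih =>
      set E := {ω | X 0 ω = f 0}
      have hs := hX.measure_path_inter_add_sdiff_le n f (f (n + 1))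
      have hsucc : {ω | ∀ m ≤ n + 1, X m ω = f m} =
          {ω | ∀ m ≤ n, X m ω = f m} ∩ {ω | X (n + 1) ω = f (n + 1)} := by
        ext ω
        exact ⟨fun h => ⟨fun m hm => h m (by omega), h _ le_rfl⟩, fun h m hm => by
          rcases hm.lt_or_eq with hm | rfl
          exacts [h.1 m (by omega), h.2]⟩
      rw [hsucc]
      set C := {ω | ∀ m ≤ n, X m ω = f m}
      set D := {ω | X (n + 1) ω = f (n + 1)}
      have hC : E ∩ C = C := Set.inter_eq_right.2 fun ω hω => hω 0 n.zero_le
      calc μ (E ∩ (C ∩ D)) + μ (E \ (C ∩ D))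
          ≤ μ (C ∩ D) + (μ (C \ D) + μ (E \ C)) := by
            refine add_le_add (measure_mono Set.inter_subset_right)
              ((measure_mono fun ω hω => ?_).trans (measure_union_le _ _))
            by_cases hωC : ω ∈ C
            exacts [Or.inl ⟨hωC, fun hD => hω.2 ⟨hωC, hD⟩⟩, Or.inr ⟨hω.1, hωC⟩]
        _ ≤ μ (E ∩ C) + μ (E \ C) := by
            rw [← add_assoc, hC]
            gcongr
        _ ≤ μ E := ih
  · have : {ω | X 0 ω = i} ∩ {ω | ∀ m ≤ n, X m ω = f m} = ∅ :=
      Set.disjoint_iff_inter_eq_empty.1 <| Set.disjoint_left.2 fun ω h h' =>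
        hf ((h' 0 n.zero_le).symm.trans h)
    rw [this, measure_empty, zero_add]
    exact measure_mono Set.sdiff_subset

theorem setOf_eq_iUnion_path {Ω : Type*} (X : ℕ → Ω → S) (n : ℕ) (x : S) :
    {ω | X n ω = x} = ⋃ g : Fin n → S,
      {ω | ∀ m ≤ n, X m ω = if h : m < n then g ⟨m, h⟩ else x} := by
  ext ω
  refine ⟨fun hω => Set.mem_iUnion.2 ⟨fun m => X m ω, fun m hm => ?_⟩, fun hω => ?_⟩
  · split_ifs with h
    · rfl
    · rwa [show m = n by omega]
  · obtain ⟨g, hg⟩ := Set.mem_iUnion.1 hω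
    simpa using hg n le_rfl

/-- A Markov chain for an outer measure, whose path events are Carathéodory measurable, is a Markov
chain for the normalized measure on the Carathéodory `σ`-algebra and the discrete `σ`-algebra on the
state space. -/
theorem OuterMeasure.exists_isMarkovChain {Ω : Type*} (m : OuterMeasure Ω)
    (h0 : m Set.univ ≠ 0) (htop : m Set.univ ≠ ⊤) {X : ℕ → Ω → S} {P : S → S → ℝ}
    (hP : ∀ i j, 0 ≤ P i j) (hrow : ∀ i, ∑' j, P i j = 1)
    (hpath : ∀ n (f : ℕ → S), m.IsCaratheodory {ω | ∀ k ≤ n, X k ω = f k})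
    (hmk : ∀ n (j : S) (f : ℕ → S), m ({ω | X (n + 1) ω = j} ∩ {ω | ∀ k ≤ n, X k ω = f k}) =
      ENNReal.ofReal (P (f n) j) * m {ω | ∀ k ≤ n, X k ω = f k}) :
    ∃ (mΩ : MeasurableSpace Ω) (ν : @Measure Ω mΩ), @IsMarkovChain S Ω mΩ ⊤ ν X P ∧
      ∀ t, ν t = 0 → m t = 0 := by
  let mΩ : MeasurableSpace Ω := m.caratheodory
  let mS : MeasurableSpace S := ⊤
  have hpath' : ∀ n (f : ℕ → S), MeasurableSet {ω | ∀ k ≤ n, X k ω = f k} := hpath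
  have hstate : ∀ n x, MeasurableSet {ω | X n ω = x} := fun n x => by
    rw [setOf_eq_iUnion_path]
    exact MeasurableSet.iUnion fun g => hpath n _
  have hne : (m Set.univ)⁻¹ ≠ 0 := ENNReal.inv_ne_zero.2 htop
  refine ⟨mΩ, (m Set.univ)⁻¹ • m.toMeasure le_rfl, ⟨⟨?_⟩, ?_, hP, hrow, ?_⟩, fun t ht => ?_⟩
  · rw [Measure.smul_apply, toMeasure_apply _ _ MeasurableSet.univ, smul_eq_mul,
      ENNReal.inv_mul_cancel h0 htop]
  · exact fun n => measurable_to_countable' fun x => hstate n x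
  · intro n j f
    rw [Measure.smul_apply, Measure.smul_apply, toMeasure_apply _ _ (hpath' n f),
      toMeasure_apply _ _ ((hstate (n + 1) j).inter (hpath' n f)), hmk, smul_eq_mul, smul_eq_mul,
      mul_left_comm]
  · rw [Measure.smul_apply, smul_eq_mul, mul_eq_zero, or_iff_right hne] at ht
    exact nonpos_iff_eq_zero.1 ((le_toMeasure_apply m le_rfl t).trans_eq ht)

/-- Conditioning on the initial state and enlarging the `σ`-algebra on `Ω` turns a Markov chain into
one whose state space carries the discrete `σ`-algebra. -/
theorem IsMarkovChain.exists_discrete {Ω : Type*} [MeasurableSpace Ω]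
    [MeasurableSpace S] {μ : Measure Ω} {X : ℕ → Ω → S} {P : S → S → ℝ}
    (hX : IsMarkovChain μ X P) {i : S} (hi : μ {ω | X 0 ω = i} ≠ 0) :
    ∃ (mΩ : MeasurableSpace Ω) (ν : @Measure Ω mΩ), @IsMarkovChain S Ω mΩ ⊤ ν X P ∧
      ∀ t, ν t = 0 → μ (t ∩ {ω | X 0 ω = i}) = 0 := by
  have := hX.isProb
  have happly : ∀ t, OuterMeasure.restrict {ω | X 0 ω = i} μ.toOuterMeasure t =
      μ (t ∩ {ω | X 0 ω = i}) := fun t => by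
    rw [OuterMeasure.restrict_apply, Measure.coe_toOuterMeasure]
  simp_rw [← happly]
  refine OuterMeasure.exists_isMarkovChain _ ?_ ?_ hX.nonneg hX.rowSum (fun n f =>
    isCaratheodory_restrict_of_add_le (hX.measure_inter_path_add_sdiff_le i n f)) fun n y f => ?_
  · rwa [happly, Set.univ_inter]
  · rw [happly]
    exact measure_ne_top μ _
  · rw [happly, happly, Set.inter_assoc]
    by_cases hf : f 0 = i
    · rw [Set.inter_eq_left.2 (show {ω | ∀ m ≤ n, X m ω = f m} ⊆ {ω | X 0 ω = i} from
        fun ω hω => (hω 0 n.zero_le).trans hf), hX.markov]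
    · have : {ω | ∀ m ≤ n, X m ω = f m} ∩ {ω | X 0 ω = i} = ∅ :=
        Set.disjoint_iff_inter_eq_empty.1 <| Set.disjoint_left.2 fun ω h h' =>
          hf ((h 0 n.zero_le).symm.trans h')
      simp [this]

theorem cond_eq_one_of_measure_sdiff_eq_zero {Ω : Type*} [MeasurableSpace Ω] {μ : Measure Ω}
    [IsFiniteMeasure μ] {A T : Set Ω} (hA : μ A ≠ 0) (h : μ (A \ T) = 0) : μ[|A] T = 1 := by
  have hle : μ.restrict A T ≤ μ A := (measure_mono T.subset_univ).trans_eq (by simp)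
  have hge : μ A ≤ μ.restrict A T := calc
    μ A ≤ μ (T ∩ A) + μ (A \ T) := by
      rw [Set.inter_comm]
      exact measure_le_inter_add_sdiff μ A T
    _ = μ (T ∩ A) := by rw [h, add_zero]
    _ ≤ μ.restrict A T := Measure.le_restrict_apply A T
  rw [ProbabilityTheory.cond, Measure.smul_apply, hle.antisymm hge, smul_eq_mul,
    ENNReal.inv_mul_cancel hA (measure_ne_top μ A)]

/-- For a positive recurrent state `j`, conditionally on `A_i = {X_0 = i} ∩ {∃ n ≥ 1, X_n = j}`,
the fraction of time spent at `j` converges almost surely to `1/m_j`. -/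
theorem visits_div_n_tendsto_cond
    {Ω : Type*} [MeasurableSpace Ω] [MeasurableSpace S] (μ : Measure Ω)
    (X : ℕ → Ω → S) (P : S → S → ℝ) (hMC : IsMarkovChain μ X P) (j : S)
    (hj : PositiveRecurrent P j) (i : S)
    (hA : 0 < μ ({ω | X 0 ω = i} ∩ {ω | ∃ n ≥ 1, X n ω = j})) :
    μ[|{ω | X 0 ω = i} ∩ {ω | ∃ n ≥ 1, X n ω = j}]
        {ω | Tendsto (fun n : ℕ => visits X j n ω / (n : ℝ)) atTop
          (𝓝 ((meanReturn P j).toReal⁻¹))} = 1 := by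
  have := hMC.isProb
  refine cond_eq_one_of_measure_sdiff_eq_zero hA.ne' ?_
  obtain ⟨mΩ, ν, hν, hnull⟩ := hMC.exists_discrete
    (ne_of_gt (hA.trans_le (measure_mono Set.inter_subset_left)))
  let mS : MeasurableSpace S := ⊤
  have : @MeasurableSingletonClass S mS := @MeasurableSingletonClass.mk S mS fun _ => trivial
  refine measure_mono_null ?_ (hnull _ (ae_iff.1 (hν.ae_tendsto_visits_div hj)))
  rintro ω ⟨⟨h0, hvisit⟩, hlim⟩
  exact ⟨fun h => hlim (h hvisit), h0⟩
end

section
/- Let g : S → ℝ satisfy ∑_{i∈S} |g(i)| < ∞. Then almost surely lim_{n→∞} (1/n) ∑_{k=1}^n g(X_k) = ∑_{j∈C} (g(j)/m_j) · 1_{A^j}, where A^j = {∃ l ≥ 1 : X_l = j} and C is the set of positive recurrent states. -/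
open MeasureTheory Filter Topology
open scoped ENNReal NNReal

variable {S : Type*} [Countable S] [DecidableEq S]

set_option linter.unusedSectionVars false

namespace MarkovErgodic

open ProbabilityTheory

/-- A Markov chain with transition matrix `P` under a finite measure `Q` (not necessarily
normalised), all of whose events `{X n = j}` are measurable. -/
structure IsDiscreteChain {Ω : Type*} [MeasurableSpace Ω] (Q : Measure Ω) (X : ℕ → Ω → S)
    (P : S → S → ℝ) : Prop where
  measurableSet_eq : ∀ n j, MeasurableSet {ω | X n ω = j}
  nonneg : ∀ i j, 0 ≤ P i j
  rowSum : ∀ i, ∑' j, P i j = 1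
  markov : ∀ n (j : S) (f : ℕ → S),
    Q ({ω | X (n+1) ω = j} ∩ {ω | ∀ m ≤ n, X m ω = f m})
      = ENNReal.ofReal (P (f n) j) * Q {ω | ∀ m ≤ n, X m ω = f m}

/-- The event `B` only depends on `X 0, …, X t`. -/
def DependsOnPast {Ω : Type*} (X : ℕ → Ω → S) (t : ℕ) (B : Set Ω) : Prop :=
  ∀ ⦃ω ω' : Ω⦄, (∀ m ≤ t, X m ω = X m ω') → ω ∈ B → ω' ∈ B

/-- The first visit to `j` strictly after time `t` happens at time `t + u`. -/
def firstReturn {Ω : Type*} (X : ℕ → Ω → S) (j : S) (t u : ℕ) : Set Ω :=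
  {ω | 1 ≤ u ∧ X (t + u) ω = j ∧ ∀ m, 1 ≤ m → m < u → X (t + m) ω ≠ j}

lemma summable_row {P : S → S → ℝ} (h1 : ∀ i, ∑' j, P i j = 1) (i : S) : Summable (P i) := by
  by_contra h
  have := h1 i
  rw [tsum_eq_zero_of_not_summable h] at this
  exact zero_ne_one this

lemma fpass_mem_Icc {P : S → S → ℝ} (h0 : ∀ i j, 0 ≤ P i j) (h1 : ∀ i, ∑' j, P i j = 1) (j : S)
    (n : ℕ) : ∀ i, fpass P j n i ∈ Set.Icc (0 : ℝ) 1 := by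
  have hle : ∀ i l, P i l ≤ 1 := fun i l =>
    (h1 i) ▸ (summable_row h1 i).le_tsum l (fun k _ => h0 i k)
  induction n with
  | zero => intro i; simp [fpass]
  | succ n ih =>
    intro i
    cases n with
    | zero => exact ⟨h0 i j, hle i j⟩
    | succ n =>
      have hterm : ∀ l, 0 ≤ (if l = j then 0 else P i l * fpass P j (n + 1) l) ∧
          (if l = j then 0 else P i l * fpass P j (n + 1) l) ≤ P i l := by
        intro l
        split_ifs
        · exact ⟨le_rfl, h0 i l⟩
        · exact ⟨mul_nonneg (h0 i l) (ih l).1, mul_le_of_le_one_right (h0 i l) (ih l).2⟩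
      have hs : Summable fun l => if l = j then 0 else P i l * fpass P j (n + 1) l :=
        Summable.of_nonneg_of_le (fun l => (hterm l).1) (fun l => (hterm l).2) (summable_row h1 i)
      refine ⟨tsum_nonneg fun l => (hterm l).1, ?_⟩
      rw [← h1 i]
      exact hs.tsum_le_tsum (fun l => (hterm l).2) (summable_row h1 i)

lemma ofReal_fpass_add_two {P : S → S → ℝ} (h0 : ∀ i j, 0 ≤ P i j) (h1 : ∀ i, ∑' j, P i j = 1)
    (j : S) (n : ℕ) (i : S) :
    ENNReal.ofReal (fpass P j (n + 2) i) = ∑' l, if l = j then 0 else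
      ENNReal.ofReal (P i l) * ENNReal.ofReal (fpass P j (n + 1) l) := by
  have hf := fpass_mem_Icc h0 h1 j (n + 1)
  have hnn : ∀ l, 0 ≤ (if l = j then 0 else P i l * fpass P j (n + 1) l) := by
    intro l
    split_ifs
    · exact le_rfl
    · exact mul_nonneg (h0 i l) (hf l).1
  have hle : ∀ l, (if l = j then 0 else P i l * fpass P j (n + 1) l) ≤ P i l := by
    intro l
    split_ifs
    · exact h0 i l
    · exact mul_le_of_le_one_right (h0 i l) (hf l).2
  have : fpass P j (n + 2) i = ∑' l, if l = j then 0 else P i l * fpass P j (n + 1) l := rfl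
  rw [this, ENNReal.ofReal_tsum_of_nonneg hnn
    (Summable.of_nonneg_of_le hnn hle (summable_row h1 i))]
  refine tsum_congr fun l => ?_
  split_ifs
  · simp
  · exact ENNReal.ofReal_mul (h0 i l)

lemma hitProb_eq_toReal {P : S → S → ℝ} (h0 : ∀ i j, 0 ≤ P i j) (h1 : ∀ i, ∑' j, P i j = 1)
    (i j : S) : hitProb P i j = (∑' n, ENNReal.ofReal (fpass P j n i)).toReal := by
  rw [ENNReal.tsum_toReal_eq fun _ => ENNReal.ofReal_ne_top]
  exact tsum_congr fun n => (ENNReal.toReal_ofReal (fpass_mem_Icc h0 h1 j n i).1).symm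

lemma measure_eq_tsum_inter_fiber {Ω β : Type*} [MeasurableSpace Ω] [Countable β] (Q : Measure Ω)
    (φ : Ω → β) (hφ : ∀ b, MeasurableSet (φ ⁻¹' {b})) {B : Set Ω} (hB : MeasurableSet B) :
    Q B = ∑' b, Q (B ∩ φ ⁻¹' {b}) := by
  rw [← measure_iUnion _ fun b => hB.inter (hφ b)]
  · congr 1
    ext ω
    simp
  · intro a b hab
    refine Set.disjoint_left.2 fun ω h1 h2 => hab ?_
    have h1' : φ ω = a := h1.2
    have h2' : φ ω = b := h2.2
    rw [← h1', h2']

section Chain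

variable {Ω : Type*} [MeasurableSpace Ω] {Q : Measure Ω} {X : ℕ → Ω → S} {P : S → S → ℝ}

lemma measurableSet_path_fiber (hX : ∀ n j, MeasurableSet {ω | X n ω = j}) (t : ℕ)
    (g : Fin (t + 1) → S) :
    MeasurableSet ((fun ω (m : Fin (t + 1)) => X m ω) ⁻¹' {g}) := by
  have : (fun ω (m : Fin (t + 1)) => X m ω) ⁻¹' {g} = ⋂ m : Fin (t + 1), {ω | X m ω = g m} := by
    ext ω
    simp [funext_iff]
  rw [this]
  exact MeasurableSet.iInter fun m => hX _ _

lemma DependsOnPast.inter_path_fiber {t : ℕ} {B : Set Ω} (hB : DependsOnPast X t B)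
    (g : Fin (t + 1) → S) :
    B ∩ (fun ω (m : Fin (t + 1)) => X m ω) ⁻¹' {g} = ∅ ∨
      ∃ ω₀ ∈ B, B ∩ (fun ω (m : Fin (t + 1)) => X m ω) ⁻¹' {g} =
        {ω | ∀ m ≤ t, X m ω = X m ω₀} := by
  rcases Set.eq_empty_or_nonempty (B ∩ (fun ω (m : Fin (t + 1)) => X m ω) ⁻¹' {g}) with h | h
  · exact Or.inl h
  · obtain ⟨ω₀, h₀, hg⟩ := h
    refine Or.inr ⟨ω₀, h₀, ?_⟩
    have hg' : (fun m : Fin (t + 1) => X m ω₀) = g := hg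
    subst hg'
    ext ω
    simp only [Set.mem_inter_iff, Set.mem_preimage, Set.mem_singleton_iff, funext_iff,
      Set.mem_ofPred_eq]
    constructor
    · rintro ⟨-, h⟩ m hm
      exact h ⟨m, Nat.lt_succ_of_le hm⟩
    · intro h
      exact ⟨hB (fun m hm => (h m hm).symm) h₀, fun m => h m (Nat.le_of_lt_succ m.2)⟩

lemma DependsOnPast.measurableSet (hX : ∀ n j, MeasurableSet {ω | X n ω = j}) {t : ℕ} {B : Set Ω}
    (hB : DependsOnPast X t B) : MeasurableSet B := by
  have : B = ⋃ g : Fin (t + 1) → S, B ∩ (fun ω (m : Fin (t + 1)) => X m ω) ⁻¹' {g} := by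
    ext ω
    simp
  rw [this]
  refine MeasurableSet.iUnion fun g => ?_
  rcases hB.inter_path_fiber g with h | ⟨ω₀, -, h⟩
  · rw [h]; exact MeasurableSet.empty
  · rw [h]
    have : {ω | ∀ m ≤ t, X m ω = X m ω₀} = ⋂ m, ⋂ (_ : m ≤ t), {ω | X m ω = X m ω₀} := by
      ext ω
      simp
    rw [this]
    exact MeasurableSet.iInter fun m => MeasurableSet.iInter fun _ => hX _ _

lemma DependsOnPast.inter {t : ℕ} {B C : Set Ω} (hB : DependsOnPast X t B)
    (hC : DependsOnPast X t C) : DependsOnPast X t (B ∩ C) :=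
  fun _ _ h hω => ⟨hB h hω.1, hC h hω.2⟩

lemma DependsOnPast.mono {s t : ℕ} (hst : s ≤ t) {B : Set Ω} (hB : DependsOnPast X s B) :
    DependsOnPast X t B :=
  fun _ _ h hω => hB (fun m hm => h m (hm.trans hst)) hω

lemma dependsOnPast_eq (t : ℕ) (j : S) : DependsOnPast X t {ω | X t ω = j} :=
  fun _ _ h hω => (h t le_rfl).symm.trans hω

lemma IsDiscreteChain.measure_inter_next (hc : IsDiscreteChain Q X P) {t : ℕ} {B : Set Ω} {i : S}
    (hB : DependsOnPast X t B) (hi : ∀ ω ∈ B, X t ω = i) (l : S) :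
    Q (B ∩ {ω | X (t + 1) ω = l}) = ENNReal.ofReal (P i l) * Q B := by
  have hBm := hB.measurableSet hc.measurableSet_eq
  have hfib := measurableSet_path_fiber hc.measurableSet_eq t
  rw [measure_eq_tsum_inter_fiber Q _ hfib (hBm.inter (hc.measurableSet_eq (t + 1) l)),
    measure_eq_tsum_inter_fiber Q _ hfib hBm, ← ENNReal.tsum_mul_left]
  refine tsum_congr fun g => ?_
  rw [Set.inter_right_comm]
  rcases hB.inter_path_fiber g with h | ⟨ω₀, h₀, h⟩
  · simp [h]
  · rw [h, Set.inter_comm, hc.markov, hi ω₀ h₀]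

lemma measurableSet_firstReturn (hX : ∀ n j, MeasurableSet {ω | X n ω = j}) (j : S) (t u : ℕ) :
    MeasurableSet (firstReturn X j t u) := by
  refine DependsOnPast.measurableSet hX (t := t + u) fun ω ω' h hω => ?_
  refine ⟨hω.1, (h _ le_rfl) ▸ hω.2.1, fun m h1 h2 => ?_⟩
  rw [← h _ (by omega)]
  exact hω.2.2 m h1 h2

lemma IsDiscreteChain.measure_inter_firstReturn (hc : IsDiscreteChain Q X P) (j : S) (u : ℕ) :
    ∀ {t : ℕ} {B : Set Ω} {i : S}, DependsOnPast X t B → (∀ ω ∈ B, X t ω = i) →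
      Q (B ∩ firstReturn X j t u) = ENNReal.ofReal (fpass P j u i) * Q B := by
  induction u with
  | zero => intro t B i _ _; simp [firstReturn, fpass]
  | succ u ih =>
    intro t B i hB hi
    cases u with
    | zero =>
      have : firstReturn X j t (0 + 1) = {ω | X (t + 1) ω = j} := by
        ext ω
        simp only [firstReturn, Set.mem_ofPred_eq]
        constructor
        · exact fun h => h.2.1
        · exact fun h => ⟨le_rfl, h, fun m _ _ => by omega⟩
      rw [this, hc.measure_inter_next hB hi]
      rfl
    | succ u =>
      have hBm := hB.measurableSet hc.measurableSet_eq
      rw [measure_eq_tsum_inter_fiber Q (X (t + 1)) (hc.measurableSet_eq (t + 1))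
        (hBm.inter (measurableSet_firstReturn hc.measurableSet_eq j t (u + 2))),
        ofReal_fpass_add_two hc.nonneg hc.rowSum, ← ENNReal.tsum_mul_right]
      refine tsum_congr fun l => ?_
      split_ifs with hl
      · rw [zero_mul]
        convert measure_empty (μ := Q)
        refine Set.eq_empty_of_forall_notMem fun ω hω => ?_
        exact hω.1.2.2.2 1 le_rfl (by omega) (hl ▸ hω.2)
      · have hset : B ∩ firstReturn X j t (u + 2) ∩ X (t + 1) ⁻¹' {l} =
            (B ∩ {ω | X (t + 1) ω = l}) ∩ firstReturn X j (t + 1) (u + 1) := by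
          ext ω
          simp only [firstReturn, Set.mem_inter_iff, Set.mem_ofPred_eq, Set.mem_preimage,
            Set.mem_singleton_iff]
          constructor
          · rintro ⟨⟨h1, -, h2, h3⟩, h4⟩
            refine ⟨⟨h1, h4⟩, by omega, by rw [← h2]; congr 1; omega, fun m hm hm' => ?_⟩
            have := h3 (m + 1) (by omega) (by omega)
            rwa [show t + (m + 1) = t + 1 + m by omega] at this
          · rintro ⟨⟨h1, h4⟩, -, h2, h3⟩
            refine ⟨⟨h1, by omega, by rw [← h2]; congr 1; omega, fun m hm hm' => ?_⟩, h4⟩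
            rcases Nat.eq_or_lt_of_le hm with rfl | hm1
            · rw [h4]; exact hl
            · have := h3 (m - 1) (by omega) (by omega)
              rwa [show t + 1 + (m - 1) = t + m by omega] at this
        rw [hset, ih ((hB.mono (Nat.le_succ t)).inter (dependsOnPast_eq (t + 1) l))
          (fun ω hω => hω.2), hc.measure_inter_next hB hi]
        ring

end Chain

/-- The time `l` is a visit of the path `ω` to `j` at a positive time. -/
def IsVisit {Ω : Type*} (X : ℕ → Ω → S) (j : S) (ω : Ω) (l : ℕ) : Prop := 1 ≤ l ∧ X l ω = j

instance {Ω : Type*} (X : ℕ → Ω → S) (j : S) (ω : Ω) : DecidablePred (IsVisit X j ω) :=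
  fun l => inferInstanceAs (Decidable (1 ≤ l ∧ X l ω = j))

/-- The visit number `k` (counting from `0`) to `j` takes place at time `t`. -/
def visitAt {Ω : Type*} (X : ℕ → Ω → S) (j : S) (k t : ℕ) : Set Ω :=
  {ω | IsVisit X j ω t ∧ Nat.count (IsVisit X j ω) t = k}

/-- The visit number `k` (counting from `0`) to `j` takes place. -/
def hasVisit {Ω : Type*} (X : ℕ → Ω → S) (j : S) (k : ℕ) : Set Ω := ⋃ t, visitAt X j k t

/-- The time elapsed between the visits number `k` and `k + 1` to `j`. -/
noncomputable def gap {Ω : Type*} (X : ℕ → Ω → S) (j : S) (k : ℕ) (ω : Ω) : ℕ :=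
  Nat.nth (IsVisit X j ω) (k + 1) - Nat.nth (IsVisit X j ω) k

section Visits

variable {Ω : Type*} {X : ℕ → Ω → S} {j : S} {ω : Ω}

lemma nth_eq_of_mem_visitAt {k t : ℕ} (h : ω ∈ visitAt X j k t) :
    Nat.nth (IsVisit X j ω) k = t := by
  rw [← h.2]
  exact Nat.nth_count h.1

lemma mem_visitAt_nth_of {k : ℕ}
    (h : ∀ hf : (Set.ofPred (IsVisit X j ω)).Finite, k < hf.toFinset.card) :
    ω ∈ visitAt X j k (Nat.nth (IsVisit X j ω) k) :=
  ⟨Nat.nth_mem k h, Nat.count_nth h⟩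

lemma mem_visitAt_nth_of_lt_count {k s : ℕ} (h : k < Nat.count (IsVisit X j ω) s) :
    ω ∈ visitAt X j k (Nat.nth (IsVisit X j ω) k) :=
  mem_visitAt_nth_of fun hf => h.trans_le (Nat.count_le_card hf s)

lemma mem_hasVisit_of_lt_count {k s : ℕ} (h : k < Nat.count (IsVisit X j ω) s) :
    ω ∈ hasVisit X j k :=
  Set.mem_iUnion.2 ⟨_, mem_visitAt_nth_of_lt_count h⟩

lemma lt_count_of_mem_visitAt {k t : ℕ} (h : ω ∈ visitAt X j k t) :
    k < Nat.count (IsVisit X j ω) (t + 1) := by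
  rw [Nat.count_succ, if_pos h.1, h.2]
  exact Nat.lt_succ_self k

lemma hasVisit_antitone : Antitone (hasVisit X j) := by
  intro k l hkl ω h
  obtain ⟨t, ht⟩ := Set.mem_iUnion.1 h
  exact mem_hasVisit_of_lt_count (hkl.trans_lt (lt_count_of_mem_visitAt ht))

lemma mem_hasVisit_zero_iff : ω ∈ hasVisit X j 0 ↔ ∃ l ≥ 1, X l ω = j := by
  constructor
  · intro h
    obtain ⟨t, ht⟩ := Set.mem_iUnion.1 h
    exact ⟨t, ht.1.1, ht.1.2⟩
  · rintro ⟨l, h1, h2⟩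
    refine mem_hasVisit_of_lt_count (s := l + 1) ?_
    rw [Nat.count_succ, if_pos (show IsVisit X j ω l from ⟨h1, h2⟩)]
    exact Nat.succ_pos _

lemma infinite_of_forall_mem_hasVisit (h : ∀ k, ω ∈ hasVisit X j k) :
    (Set.ofPred (IsVisit X j ω)).Infinite := by
  intro hf
  obtain ⟨t, ht⟩ := Set.mem_iUnion.1 (h hf.toFinset.card)
  exact absurd (lt_count_of_mem_visitAt ht) (not_lt.2 (Nat.count_le_card hf _))

lemma disjoint_visitAt {k s t : ℕ} (hst : s ≠ t) :
    Disjoint (visitAt X j k s) (visitAt X j k t) :=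
  Set.disjoint_left.2 fun _ hs ht =>
    hst ((nth_eq_of_mem_visitAt hs).symm.trans (nth_eq_of_mem_visitAt ht))

lemma dependsOnPast_visitAt (k t : ℕ) : DependsOnPast X t (visitAt X j k t) := by
  intro ω ω' h hω
  refine ⟨⟨hω.1.1, (h t le_rfl) ▸ hω.1.2⟩, ?_⟩
  rw [← hω.2, Nat.count_eq_card_filter_range, Nat.count_eq_card_filter_range]
  congr 1
  refine Finset.filter_congr fun m hm => ?_
  simp only [IsVisit, h m (Finset.mem_range.1 hm).le]

lemma mem_firstReturn_iff {k t u : ℕ} (h : ω ∈ visitAt X j k t) :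
    ω ∈ firstReturn X j t u ↔ 1 ≤ u ∧ ω ∈ visitAt X j (k + 1) (t + u) := by
  constructor
  · rintro ⟨hu, h1, h2⟩
    obtain ⟨v, rfl⟩ : ∃ v, u = v + 1 := ⟨u - 1, by omega⟩
    refine ⟨hu, ⟨by omega, h1⟩, ?_⟩
    rw [Nat.count_add, h.2, Nat.count_succ', Nat.count_of_forall_not,
      if_pos (show IsVisit X j ω (t + 0) from h.1), zero_add]
    intro m hm hv
    exact h2 (m + 1) (by omega) (by omega) hv.2
  · rintro ⟨hu, h1, h2⟩
    obtain ⟨v, rfl⟩ : ∃ v, u = v + 1 := ⟨u - 1, by omega⟩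
    refine ⟨hu, h1.2, fun m hm hmv hX => ?_⟩
    rw [Nat.count_add, h.2, Nat.count_succ', if_pos (show IsVisit X j ω (t + 0) from h.1)] at h2
    have h0 : Nat.count (fun l => IsVisit X j ω (t + (l + 1))) v = 0 := by omega
    refine Nat.count_iff_forall_not.1 h0 (m - 1) (by omega) ?_
    rw [show t + (m - 1 + 1) = t + m by omega]
    exact ⟨by omega, hX⟩

lemma gap_eq_iff {k u : ℕ} (hu : 1 ≤ u) :
    gap X j k ω = u ↔ ∃ t, ω ∈ visitAt X j k t ∧ ω ∈ firstReturn X j t u := by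
  constructor
  · intro h
    have hk : ∀ hf : (Set.ofPred (IsVisit X j ω)).Finite, k + 1 < hf.toFinset.card := by
      intro hf
      by_contra hcard
      have : Nat.nth (IsVisit X j ω) (k + 1) = 0 := Nat.nth_of_card_le hf (not_lt.1 hcard)
      rw [gap, this] at h
      omega
    have h0 := mem_visitAt_nth_of fun hf => (Nat.lt_succ_self k).trans (hk hf)
    refine ⟨_, h0, (mem_firstReturn_iff h0).2 ⟨hu, ?_⟩⟩
    have h1 := mem_visitAt_nth_of hk
    unfold gap at h
    rwa [show Nat.nth (IsVisit X j ω) k + u = Nat.nth (IsVisit X j ω) (k + 1) by omega]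
  · rintro ⟨t, h0, h1⟩
    rw [gap, nth_eq_of_mem_visitAt h0, nth_eq_of_mem_visitAt ((mem_firstReturn_iff h0).1 h1).2]
    omega

lemma gap_pos_of_mem_hasVisit {k : ℕ} (h : ω ∈ hasVisit X j (k + 1)) : 1 ≤ gap X j k ω := by
  obtain ⟨s, hs⟩ := Set.mem_iUnion.1 h
  have hlt : k < Nat.count (IsVisit X j ω) s := by rw [hs.2]; exact Nat.lt_succ_self k
  have := Nat.nth_lt_of_lt_count hlt
  rw [gap, nth_eq_of_mem_visitAt hs]
  omega

lemma setOf_gap_eq {k u : ℕ} (hu : 1 ≤ u) :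
    {ω : Ω | gap X j k ω = u} = ⋃ t, visitAt X j k t ∩ firstReturn X j t u := by
  ext ω
  rw [Set.mem_iUnion]
  exact gap_eq_iff hu

lemma hasVisit_succ (k : ℕ) :
    hasVisit X j (k + 1) = ⋃ u, {ω : Ω | 1 ≤ u ∧ gap X j k ω = u} := by
  ext ω
  rw [Set.mem_iUnion]
  constructor
  · exact fun h => ⟨_, gap_pos_of_mem_hasVisit h, rfl⟩
  · rintro ⟨u, hu, h⟩
    obtain ⟨t, h0, h1⟩ := (gap_eq_iff hu).1 h
    exact Set.mem_iUnion.2 ⟨_, ((mem_firstReturn_iff h0).1 h1).2⟩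

lemma dependsOnPast_gap_inter_visitAt {i k s : ℕ} (hik : i < k) (hs : 1 ≤ s) (t : ℕ) :
    DependsOnPast X t ({ω : Ω | gap X j i ω = s} ∩ visitAt X j k t) := by
  rintro ω ω' h ⟨h1, h2⟩
  refine ⟨?_, dependsOnPast_visitAt k t h h2⟩
  obtain ⟨r, hr, hr'⟩ := (gap_eq_iff hs).1 h1
  have hrs := ((mem_firstReturn_iff hr).1 hr').2
  have hle : r + s ≤ t := by
    by_contra! hlt
    have := Nat.count_strict_mono h2.1 hlt
    rw [h2.2, hrs.2] at this
    omega
  have hω'r := dependsOnPast_visitAt i r (fun m hm => h m (by omega)) hr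
  have hω'rs := dependsOnPast_visitAt (i + 1) (r + s) (fun m hm => h m (by omega)) hrs
  exact (gap_eq_iff hs).2 ⟨r, hω'r, (mem_firstReturn_iff hω'r).2 ⟨hs, hω'rs⟩⟩

lemma visits_eq_count (n : ℕ) :
    visits X j n ω = Nat.count (IsVisit X j ω) (n + 1) := by
  rw [visits, Finset.sum_boole, Nat.count_eq_card_filter_range]
  suffices h : (Finset.Icc 1 n).filter (fun k => X k ω = j) =
      (Finset.range (n + 1)).filter (IsVisit X j ω) by rw [h]
  ext m
  simp only [Finset.mem_filter, Finset.mem_Icc, Finset.mem_range, IsVisit]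
  constructor
  · rintro ⟨⟨h1, h2⟩, h3⟩; exact ⟨by omega, h1, h3⟩
  · rintro ⟨h2, h1, h3⟩; exact ⟨⟨h1, by omega⟩, h3⟩

end Visits

section ReturnLaw

variable {Ω : Type*} [MeasurableSpace Ω] {Q : Measure Ω} {X : ℕ → Ω → S} {P : S → S → ℝ}

lemma measurableSet_visitAt (hX : ∀ n j, MeasurableSet {ω | X n ω = j}) (j : S) (k t : ℕ) :
    MeasurableSet (visitAt X j k t) :=
  (dependsOnPast_visitAt k t).measurableSet hX

lemma measurableSet_hasVisit (hX : ∀ n j, MeasurableSet {ω | X n ω = j}) (j : S) (k : ℕ) :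
    MeasurableSet (hasVisit X j k) :=
  MeasurableSet.iUnion fun t => measurableSet_visitAt hX j k t

lemma measurable_gap (hX : ∀ n j, MeasurableSet {ω | X n ω = j}) (j : S) (k : ℕ) :
    Measurable (gap X j k) := by
  have hpos : ∀ u, 1 ≤ u → MeasurableSet {ω | gap X j k ω = u} := by
    intro u hu
    rw [setOf_gap_eq hu]
    exact MeasurableSet.iUnion fun t =>
      (measurableSet_visitAt hX j k t).inter (measurableSet_firstReturn hX j t u)
  refine measurable_to_countable' fun u => ?_
  rcases Nat.eq_zero_or_pos u with rfl | hu
  · have : gap X j k ⁻¹' {0} = (⋃ u, {ω | gap X j k ω = u + 1})ᶜ := by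
      ext ω
      simp only [Set.mem_preimage, Set.mem_singleton_iff, Set.mem_compl_iff, Set.mem_iUnion,
        Set.mem_ofPred_eq, not_exists]
      constructor
      · intro h u; omega
      · intro h
        by_contra h0
        exact h (gap X j k ω - 1) (by omega)
    rw [this]
    exact (MeasurableSet.iUnion fun u => hpos (u + 1) (by omega)).compl
  · exact hpos u hu

lemma IsDiscreteChain.measure_inter_gap (hc : IsDiscreteChain Q X P) {j : S} {k u : ℕ}
    (hu : 1 ≤ u) {B : Set Ω} (hB : ∀ t, DependsOnPast X t (B ∩ visitAt X j k t)) :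
    Q (B ∩ {ω | gap X j k ω = u}) =
      ENNReal.ofReal (fpass P j u j) * Q (B ∩ hasVisit X j k) := by
  have hX := hc.measurableSet_eq
  have hdisj : Pairwise (Function.onFun Disjoint fun t => B ∩ visitAt X j k t) :=
    fun s t hst => (disjoint_visitAt hst).mono Set.inter_subset_right Set.inter_subset_right
  rw [setOf_gap_eq hu, hasVisit, Set.inter_iUnion, Set.inter_iUnion,
    measure_iUnion hdisj fun t => (hB t).measurableSet hX, ← ENNReal.tsum_mul_left,
    measure_iUnion]
  · refine tsum_congr fun t => ?_
    rw [← Set.inter_assoc]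
    exact hc.measure_inter_firstReturn j u (hB t) fun ω hω => hω.2.1.2
  · intro s t hst
    exact (hdisj hst).mono (Set.inter_subset_inter_right _ Set.inter_subset_left)
      (Set.inter_subset_inter_right _ Set.inter_subset_left)
  · intro t
    rw [← Set.inter_assoc]
    exact ((hB t).measurableSet hX).inter (measurableSet_firstReturn hX j t u)

lemma IsDiscreteChain.measure_hasVisit_succ (hc : IsDiscreteChain Q X P) (j : S) (k : ℕ) :
    Q (hasVisit X j (k + 1)) =
      (∑' u, ENNReal.ofReal (fpass P j u j)) * Q (hasVisit X j k) := by
  rw [hasVisit_succ, measure_iUnion, ← ENNReal.tsum_mul_right]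
  · refine tsum_congr fun u => ?_
    rcases Nat.eq_zero_or_pos u with rfl | hu
    · simp [fpass]
    · have := hc.measure_inter_gap (B := Set.univ) (j := j) (k := k) hu fun t => by
        rw [Set.univ_inter]; exact dependsOnPast_visitAt k t
      rw [Set.univ_inter, Set.univ_inter] at this
      rw [← this]
      congr 1
      ext ω
      exact ⟨fun h => h.2, fun h => ⟨hu, h⟩⟩
  · intro u v huv
    exact Set.disjoint_left.2 fun ω h1 h2 => huv (h1.2.symm.trans h2.2)
  · intro u
    exact (MeasurableSet.const _).inter (measurable_gap hc.measurableSet_eq j k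
      (measurableSet_singleton u))

lemma IsDiscreteChain.measure_hasVisit (hc : IsDiscreteChain Q X P) (j : S) (k : ℕ) :
    Q (hasVisit X j k) =
      (∑' u, ENNReal.ofReal (fpass P j u j)) ^ k * Q (hasVisit X j 0) := by
  induction k with
  | zero => simp
  | succ k ih => rw [hc.measure_hasVisit_succ, ih, pow_succ', mul_assoc]

end ReturnLaw

section Renewal

lemma tendsto_count_succ_div {p : ℕ → Prop} [DecidablePred p] (hp : (Set.ofPred p).Infinite)
    (h0 : ¬ p 0) {L : ℝ}
    (hL : Tendsto (fun n : ℕ => (n : ℝ) / (Nat.nth p n : ℝ)) atTop (𝓝 L)) :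
    Tendsto (fun N : ℕ => (Nat.count p (N + 1) : ℝ) / (N : ℝ)) atTop (𝓝 L) := by
  have hc : Tendsto (fun N => Nat.count p (N + 1)) atTop atTop := by
    refine tendsto_atTop.2 fun b => ?_
    filter_upwards [eventually_ge_atTop (Nat.nth p b)] with N hN
    exact ((Nat.lt_nth_iff_count_lt hp).2 (Nat.lt_succ_of_le hN)).le
  have hd : Tendsto (fun N => Nat.count p (N + 1) - 1) atTop atTop :=
    (tendsto_sub_atTop_nat 1).comp hc
  have hlow := hL.comp hc
  have hup := (hL.comp hd).add tendsto_one_div_atTop_nhds_zero_nat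
  rw [add_zero] at hup
  refine tendsto_of_tendsto_of_tendsto_of_le_of_le' hlow hup ?_ ?_
  · filter_upwards [eventually_gt_atTop 0] with N hN
    have h1 : N ≤ Nat.nth p (Nat.count p (N + 1)) := by
      by_contra! h
      exact lt_irrefl _ ((Nat.lt_nth_iff_count_lt hp).2 (h.trans (Nat.lt_succ_self N)))
    exact div_le_div_of_nonneg_left (Nat.cast_nonneg _) (Nat.cast_pos.2 hN) (Nat.cast_le.2 h1)
  · filter_upwards [eventually_gt_atTop 0, hc.eventually_ge_atTop 1] with N hN h1
    have h2 : Nat.nth p (Nat.count p (N + 1) - 1) ≤ N :=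
      Nat.le_of_lt_succ ((Nat.lt_nth_iff_count_lt hp).1 (Nat.sub_lt h1 zero_lt_one))
    have h3 : 0 < Nat.nth p (Nat.count p (N + 1) - 1) :=
      Nat.pos_of_ne_zero fun h => h0 (h ▸ Nat.nth_mem_of_infinite hp _)
    have h4 : (Nat.count p (N + 1) : ℝ) = ((Nat.count p (N + 1) - 1 : ℕ) : ℝ) + 1 := by
      rw [Nat.cast_sub h1]; simp
    rw [h4, add_div]
    exact add_le_add_left (div_le_div_of_nonneg_left (Nat.cast_nonneg _) (Nat.cast_pos.2 h3)
      (Nat.cast_le.2 h2)) _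

lemma nth_div_eq {p : ℕ → Prop} (hp : (Set.ofPred p).Infinite) (n : ℕ) :
    (Nat.nth p n : ℝ) / n = (Nat.nth p 0 : ℝ) / n +
      (∑ k ∈ Finset.range n, ((Nat.nth p (k + 1) - Nat.nth p k : ℕ) : ℝ)) / n := by
  have h : ∀ k, ((Nat.nth p (k + 1) - Nat.nth p k : ℕ) : ℝ) =
      (Nat.nth p (k + 1) : ℝ) - (Nat.nth p k : ℝ) :=
    fun k => Nat.cast_sub (Nat.nth_strictMono hp (Nat.lt_succ_self k)).le
  simp_rw [h]
  rw [Finset.sum_range_sub (fun k => (Nat.nth p k : ℝ)), ← add_div]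
  congr 1
  ring

lemma tendsto_div_nth_of_tendsto {p : ℕ → Prop} (hp : (Set.ofPred p).Infinite) {m : ℝ}
    (hm : m ≠ 0)
    (h : Tendsto (fun n : ℕ => (∑ k ∈ Finset.range n,
      ((Nat.nth p (k + 1) - Nat.nth p k : ℕ) : ℝ)) / n) atTop (𝓝 m)) :
    Tendsto (fun n : ℕ => (n : ℝ) / (Nat.nth p n : ℝ)) atTop (𝓝 (1 / m)) := by
  have h1 := (tendsto_const_div_atTop_nhds_zero_nat (Nat.nth p 0 : ℝ)).add h
  simp_rw [← nth_div_eq hp, zero_add] at h1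
  simpa [inv_div] using h1.inv₀ hm

lemma tendsto_div_nth_of_tendsto_atTop {p : ℕ → Prop} (hp : (Set.ofPred p).Infinite)
    (h : Tendsto (fun n : ℕ => (∑ k ∈ Finset.range n,
      ((Nat.nth p (k + 1) - Nat.nth p k : ℕ) : ℝ)) / n) atTop atTop) :
    Tendsto (fun n : ℕ => (n : ℝ) / (Nat.nth p n : ℝ)) atTop (𝓝 0) := by
  have h1 : Tendsto (fun n : ℕ => (Nat.nth p n : ℝ) / n) atTop atTop := by
    refine tendsto_atTop_mono (fun n => ?_) h
    rw [nth_div_eq hp]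
    exact le_add_of_nonneg_left (by positivity)
  simpa [Function.comp_def, inv_div] using tendsto_inv_atTop_zero.comp h1

end Renewal

section Recurrent

variable {Ω : Type*} [MeasurableSpace Ω] {Q : Measure Ω} [IsFiniteMeasure Q] {X : ℕ → Ω → S}
  {P : S → S → ℝ} {j : S}

lemma IsDiscreteChain.ae_forall_mem_hasVisit (hc : IsDiscreteChain Q X P)
    (hF : ∑' u, ENNReal.ofReal (fpass P j u j) = 1) :
    ∀ᵐ ω ∂Q, ω ∈ hasVisit X j 0 → ∀ k, ω ∈ hasVisit X j k := by
  have h : ∀ k, ∀ᵐ ω ∂Q, ω ∈ hasVisit X j 0 → ω ∈ hasVisit X j k := by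
    intro k
    have hk : Q (hasVisit X j k) = Q (hasVisit X j 0) := by
      rw [hc.measure_hasVisit, hF, one_pow, one_mul]
    have := ae_eq_of_subset_of_measure_ge (hasVisit_antitone (Nat.zero_le k)) hk.ge
      (measurableSet_hasVisit hc.measurableSet_eq j k).nullMeasurableSet (measure_ne_top Q _)
    filter_upwards [this.mem_iff] with ω hω h0
    exact hω.2 h0
  filter_upwards [ae_all_iff.2 h] with ω hω h0 k
  exact hω k h0

lemma IsDiscreteChain.cond_inter_gap (hc : IsDiscreteChain Q X P)
    (hF : ∑' u, ENNReal.ofReal (fpass P j u j) = 1) {k : ℕ} {B : Set Ω}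
    (hB : ∀ t, DependsOnPast X t (B ∩ visitAt X j k t)) (u : ℕ) :
    Q[B ∩ {ω | gap X j k ω = u} | hasVisit X j 0] =
      ENNReal.ofReal (fpass P j u j) * Q[B | hasVisit X j 0] := by
  have hae := hc.ae_forall_mem_hasVisit hF
  have hm0 := measurableSet_hasVisit hc.measurableSet_eq j 0
  rw [cond_apply hm0, cond_apply hm0, mul_left_comm]
  congr 1
  rcases Nat.eq_zero_or_pos u with rfl | hu
  · simp only [fpass, ENNReal.ofReal_zero, zero_mul]
    refine measure_mono_null ?_ (ae_iff.1 hae)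
    rintro ω ⟨h0, -, hg⟩ hall
    have := gap_pos_of_mem_hasVisit (hall h0 (k + 1))
    have hg' : gap X j k ω = 0 := hg
    omega
  · have hset : ∀ t, hasVisit X j 0 ∩ B ∩ visitAt X j k t = B ∩ visitAt X j k t := by
      intro t
      rw [Set.inter_assoc]
      exact Set.inter_eq_right.2 fun ω hω =>
        hasVisit_antitone (Nat.zero_le k) (Set.mem_iUnion.2 ⟨t, hω.2⟩)
    rw [← Set.inter_assoc, hc.measure_inter_gap hu fun t => by rw [hset]; exact hB t]
    congr 1
    refine measure_congr ?_
    filter_upwards [hae] with ω hω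
    exact propext ⟨fun h => h.1, fun h => ⟨h, hω h.1 k⟩⟩

lemma IsDiscreteChain.cond_gap_eq (hc : IsDiscreteChain Q X P)
    (hF : ∑' u, ENNReal.ofReal (fpass P j u j) = 1) (h0 : Q (hasVisit X j 0) ≠ 0) (k u : ℕ) :
    Q[{ω | gap X j k ω = u} | hasVisit X j 0] = ENNReal.ofReal (fpass P j u j) := by
  have := cond_isProbabilityMeasure h0
  have h := hc.cond_inter_gap hF (k := k) (B := Set.univ)
    (fun t => by rw [Set.univ_inter]; exact dependsOnPast_visitAt k t) u
  rwa [Set.univ_inter, measure_univ, mul_one] at h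

lemma IsDiscreteChain.cond_gap_inter_gap (hc : IsDiscreteChain Q X P)
    (hF : ∑' u, ENNReal.ofReal (fpass P j u j) = 1) (h0 : Q (hasVisit X j 0) ≠ 0)
    {i k : ℕ} (hik : i < k) (s u : ℕ) :
    Q[{ω | gap X j i ω = s} ∩ {ω | gap X j k ω = u} | hasVisit X j 0] =
      ENNReal.ofReal (fpass P j s j) * ENNReal.ofReal (fpass P j u j) := by
  rcases Nat.eq_zero_or_pos s with rfl | hs
  · have h := hc.cond_gap_eq hF h0 i 0
    simp only [fpass, ENNReal.ofReal_zero, zero_mul] at h ⊢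
    exact measure_mono_null Set.inter_subset_left h
  · rw [hc.cond_inter_gap hF (dependsOnPast_gap_inter_visitAt hik hs), hc.cond_gap_eq hF h0,
      mul_comm]

lemma IsDiscreteChain.indepFun_gap (hc : IsDiscreteChain Q X P)
    (hF : ∑' u, ENNReal.ofReal (fpass P j u j) = 1) (h0 : Q (hasVisit X j 0) ≠ 0)
    {i k : ℕ} (hik : i < k) :
    IndepFun (gap X j i) (gap X j k) Q[|hasVisit X j 0] := by
  have := cond_isProbabilityMeasure h0
  have hm := measurable_gap hc.measurableSet_eq j
  rw [indepFun_iff_map_prod_eq_prod_map_map (hm i).aemeasurable (hm k).aemeasurable]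
  refine Measure.ext_of_singleton fun ⟨s, u⟩ => ?_
  rw [← Set.singleton_prod_singleton, Measure.prod_prod,
    Measure.map_apply ((hm i).prodMk (hm k))
      ((measurableSet_singleton s).prod (measurableSet_singleton u)),
    Measure.map_apply (hm i) (measurableSet_singleton s),
    Measure.map_apply (hm k) (measurableSet_singleton u)]
  exact (hc.cond_gap_inter_gap hF h0 hik s u).trans
    (congrArg₂ _ (hc.cond_gap_eq hF h0 i s).symm (hc.cond_gap_eq hF h0 k u).symm)

lemma IsDiscreteChain.identDistrib_gap (hc : IsDiscreteChain Q X P)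
    (hF : ∑' u, ENNReal.ofReal (fpass P j u j) = 1) (h0 : Q (hasVisit X j 0) ≠ 0) (i : ℕ) :
    IdentDistrib (gap X j i) (gap X j 0) Q[|hasVisit X j 0] Q[|hasVisit X j 0] := by
  have hm := measurable_gap hc.measurableSet_eq j
  refine ⟨(hm i).aemeasurable, (hm 0).aemeasurable, Measure.ext_of_singleton fun u => ?_⟩
  rw [Measure.map_apply (hm i) (measurableSet_singleton u),
    Measure.map_apply (hm 0) (measurableSet_singleton u)]
  exact (hc.cond_gap_eq hF h0 i u).trans (hc.cond_gap_eq hF h0 0 u).symm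

lemma IsDiscreteChain.ae_tendsto_average_gap (hc : IsDiscreteChain Q X P)
    (hF : ∑' u, ENNReal.ofReal (fpass P j u j) = 1) (h0 : Q (hasVisit X j 0) ≠ 0) (φ : ℕ → ℕ)
    (hφ : ∫⁻ ω, (φ (gap X j 0 ω) : ℝ≥0∞) ∂Q[|hasVisit X j 0] ≠ ⊤) :
    ∀ᵐ ω ∂Q[|hasVisit X j 0], Tendsto
      (fun n : ℕ => (∑ k ∈ Finset.range n, (φ (gap X j k ω) : ℝ)) / n) atTop
      (𝓝 (∫⁻ ω, (φ (gap X j 0 ω) : ℝ≥0∞) ∂Q[|hasVisit X j 0]).toReal) := by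
  have hm := measurable_gap hc.measurableSet_eq j
  have hψ : Measurable fun u : ℕ => (φ u : ℝ) := measurable_from_top
  have hofReal : ∀ u : ℕ, ENNReal.ofReal (φ u : ℝ) = (φ u : ℝ≥0∞) := fun u => by simp
  have hint : Integrable (fun ω => (φ (gap X j 0 ω) : ℝ)) Q[|hasVisit X j 0] := by
    refine ⟨(hψ.comp (hm 0)).aestronglyMeasurable, ?_⟩
    rw [hasFiniteIntegral_iff_ofReal (ae_of_all _ fun _ => Nat.cast_nonneg _)]
    simp_rw [hofReal]
    exact hφ.lt_top
  have hlim := strong_law_ae_real (fun k ω => (φ (gap X j k ω) : ℝ)) hint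
    (fun i k hik => by
      rcases hik.lt_or_gt with h | h
      · exact (hc.indepFun_gap hF h0 h).comp hψ hψ
      · exact ((hc.indepFun_gap hF h0 h).comp hψ hψ).symm)
    (fun i => (hc.identDistrib_gap hF h0 i).comp hψ)
  rw [integral_eq_lintegral_of_nonneg_ae (ae_of_all _ fun _ => Nat.cast_nonneg _)
    hint.aestronglyMeasurable] at hlim
  simpa only [hofReal] using hlim

lemma IsDiscreteChain.lintegral_gap (hc : IsDiscreteChain Q X P)
    (hF : ∑' u, ENNReal.ofReal (fpass P j u j) = 1) (h0 : Q (hasVisit X j 0) ≠ 0) :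
    ∫⁻ ω, (gap X j 0 ω : ℝ≥0∞) ∂Q[|hasVisit X j 0] = meanReturn P j := by
  have hm := measurable_gap hc.measurableSet_eq j 0
  rw [← lintegral_map (f := fun u : ℕ => (u : ℝ≥0∞)) measurable_from_top hm, lintegral_countable',
    meanReturn]
  refine tsum_congr fun u => ?_
  rw [Measure.map_apply hm (measurableSet_singleton u)]
  exact congrArg _ (hc.cond_gap_eq hF h0 0 u)

lemma meanReturn_ne_zero (hF : ∑' u, ENNReal.ofReal (fpass P j u j) = 1) :
    meanReturn P j ≠ 0 := by
  have h : 1 ≤ meanReturn P j := by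
    rw [← hF]
    refine ENNReal.tsum_le_tsum fun u => ?_
    rcases Nat.eq_zero_or_pos u with rfl | hu
    · simp [fpass]
    · exact le_mul_of_one_le_left zero_le (by exact_mod_cast hu)
  exact (zero_lt_one.trans_le h).ne'

lemma IsDiscreteChain.ae_tendsto_average_gap_atTop (hc : IsDiscreteChain Q X P)
    (hF : ∑' u, ENNReal.ofReal (fpass P j u j) = 1) (h0 : Q (hasVisit X j 0) ≠ 0)
    (htop : meanReturn P j = ⊤) :
    ∀ᵐ ω ∂Q[|hasVisit X j 0], Tendsto
      (fun n : ℕ => (∑ k ∈ Finset.range n, (gap X j k ω : ℝ)) / n) atTop atTop := by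
  have := cond_isProbabilityMeasure h0
  have hm := measurable_gap hc.measurableSet_eq j 0
  have hfin : ∀ M : ℕ, ∫⁻ ω, ((min (gap X j 0 ω) M : ℕ) : ℝ≥0∞) ∂Q[|hasVisit X j 0] ≠ ⊤ := by
    intro M
    refine ne_top_of_le_ne_top (ENNReal.natCast_ne_top M) ?_
    calc ∫⁻ ω, ((min (gap X j 0 ω) M : ℕ) : ℝ≥0∞) ∂Q[|hasVisit X j 0]
        ≤ ∫⁻ _, (M : ℝ≥0∞) ∂Q[|hasVisit X j 0] :=
          lintegral_mono fun ω => Nat.cast_le.2 (min_le_right _ _)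
      _ = M := by simp
  have hsup : ⨆ M : ℕ, ∫⁻ ω, ((min (gap X j 0 ω) M : ℕ) : ℝ≥0∞) ∂Q[|hasVisit X j 0] = ⊤ := by
    rw [← lintegral_iSup, ← htop, ← hc.lintegral_gap hF h0]
    · refine lintegral_congr fun ω => le_antisymm (iSup_le fun M => ?_) ?_
      · exact Nat.cast_le.2 (min_le_left _ _)
      · exact le_iSup_of_le (gap X j 0 ω) (by rw [min_self])
    · exact fun M => (measurable_from_top (f := fun u : ℕ => ((min u M : ℕ) : ℝ≥0∞))).comp hm
    · exact fun M N hMN ω => Nat.cast_le.2 (min_le_min_left _ hMN)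
  filter_upwards [ae_all_iff.2 fun M : ℕ =>
    hc.ae_tendsto_average_gap hF h0 (fun u => min u M) (hfin M)] with ω hω
  refine tendsto_atTop.2 fun b => ?_
  obtain ⟨K, hK⟩ := exists_nat_ge b
  obtain ⟨M, hM⟩ := lt_iSup_iff.1 (hsup ▸ ENNReal.natCast_lt_top K)
  have hKM : (K : ℝ) <
      (∫⁻ ω, ((min (gap X j 0 ω) M : ℕ) : ℝ≥0∞) ∂Q[|hasVisit X j 0]).toReal := by
    simpa using (ENNReal.toReal_lt_toReal (ENNReal.natCast_ne_top K) (hfin M)).2 hM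
  filter_upwards [(hω M).eventually_const_lt hKM] with n hn
  refine hK.trans (hn.le.trans ?_)
  gcongr
  exact min_le_left _ _

end Recurrent

/-- The asymptotic frequency of the visits to `j` once `j` has been reached. It vanishes when `j`
is null recurrent, as then `(meanReturn P j).toReal = 0`. -/
noncomputable def limitFreq (P : S → S → ℝ) (j : S) : ℝ :=
  if hitProb P j j = 1 then 1 / (meanReturn P j).toReal else 0

lemma limitFreq_of_positiveRecurrent {P : S → S → ℝ} {j : S} (h : PositiveRecurrent P j) :
    limitFreq P j = 1 / (meanReturn P j).toReal :=
  if_pos h.1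

lemma limitFreq_of_not_positiveRecurrent {P : S → S → ℝ} {j : S} (h : ¬ PositiveRecurrent P j) :
    limitFreq P j = 0 := by
  unfold limitFreq
  split_ifs with h1
  · have : meanReturn P j = ⊤ := by
      by_contra h2
      exact h ⟨h1, lt_top_iff_ne_top.2 h2⟩
    simp [this]
  · rfl

section Frequency

variable {Ω : Type*} [MeasurableSpace Ω] {Q : Measure Ω} [IsFiniteMeasure Q] {X : ℕ → Ω → S}
  {P : S → S → ℝ}

lemma IsDiscreteChain.ae_tendsto_visits_of_recurrent (hc : IsDiscreteChain Q X P) {j : S}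
    (hF : ∑' u, ENNReal.ofReal (fpass P j u j) = 1) (h0 : Q (hasVisit X j 0) ≠ 0) :
    ∀ᵐ ω ∂Q, ω ∈ hasVisit X j 0 → Tendsto (fun n : ℕ => visits X j n ω / n) atTop
      (𝓝 (1 / (meanReturn P j).toReal)) := by
  have hm0 := measurableSet_hasVisit hc.measurableSet_eq j 0
  have hgap : ∀ᵐ ω ∂Q[|hasVisit X j 0], (Set.ofPred (IsVisit X j ω)).Infinite →
      Tendsto (fun n : ℕ => (n : ℝ) / (Nat.nth (IsVisit X j ω) n : ℝ)) atTop
        (𝓝 (1 / (meanReturn P j).toReal)) := by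
    by_cases htop : meanReturn P j = ⊤
    · filter_upwards [hc.ae_tendsto_average_gap_atTop hF h0 htop] with ω hω hinf
      simpa [htop] using tendsto_div_nth_of_tendsto_atTop hinf hω
    · have hlint := hc.lintegral_gap hF h0
      have := hc.ae_tendsto_average_gap hF h0 id (by simpa only [id, hlint] using htop)
      simp only [id, hlint] at this
      filter_upwards [this] with ω hω hinf
      exact tendsto_div_nth_of_tendsto hinf
        (ENNReal.toReal_ne_zero.2 ⟨meanReturn_ne_zero hF, htop⟩) hω
  rw [ProbabilityTheory.cond, Measure.ae_ennreal_smul_measure_iff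
    (ENNReal.inv_ne_zero.2 (measure_ne_top Q _)), ae_restrict_iff' hm0] at hgap
  filter_upwards [hgap, hc.ae_forall_mem_hasVisit hF] with ω hω hall hmem
  have hinf := infinite_of_forall_mem_hasVisit (hall hmem)
  simp_rw [visits_eq_count]
  exact tendsto_count_succ_div hinf (fun h => by simpa using h.1) (hω hmem hinf)

lemma tendsto_visits_of_notMem_hasVisit {Ω : Type*} {X : ℕ → Ω → S} {j : S} {ω : Ω} {k : ℕ}
    (h : ω ∉ hasVisit X j k) : Tendsto (fun n : ℕ => visits X j n ω / n) atTop (𝓝 0) := by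
  refine squeeze_zero (fun n => ?_) (fun n => ?_) (tendsto_const_div_atTop_nhds_zero_nat (k : ℝ))
  · rw [visits_eq_count]; positivity
  · rw [visits_eq_count]
    gcongr
    by_contra! hlt
    exact h (mem_hasVisit_of_lt_count hlt)

lemma IsDiscreteChain.ae_exists_notMem_hasVisit (hc : IsDiscreteChain Q X P) {j : S}
    (hF : ∑' u, ENNReal.ofReal (fpass P j u j) ≠ 1) :
    ∀ᵐ ω ∂Q, ∃ k, ω ∉ hasVisit X j k := by
  rw [ae_iff]
  simp only [not_exists, not_not]
  have hle : ∀ k, Q {ω | ∀ k, ω ∈ hasVisit X j k} ≤ Q (hasVisit X j k) :=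
    fun k => measure_mono fun ω hω => hω k
  rcases eq_or_ne (Q (hasVisit X j 0)) 0 with h0 | h0
  · exact le_antisymm ((hle 0).trans h0.le) zero_le
  · have hF1 : ∑' u, ENNReal.ofReal (fpass P j u j) ≤ 1 := by
      have h1 : Q (hasVisit X j 1) ≤ 1 * Q (hasVisit X j 0) := by
        rw [one_mul]; exact measure_mono (hasVisit_antitone zero_le_one)
      rw [hc.measure_hasVisit_succ] at h1
      exact (ENNReal.mul_le_mul_iff_left h0 (measure_ne_top Q _)).1 h1
    have hlim := ENNReal.Tendsto.mul_const
      (ENNReal.tendsto_pow_atTop_nhds_zero_of_lt_one (lt_of_le_of_ne hF1 hF))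
      (Or.inr (measure_ne_top Q (hasVisit X j 0)))
    rw [zero_mul] at hlim
    exact le_antisymm (ge_of_tendsto' hlim fun k => (hle k).trans (hc.measure_hasVisit j k).le)
      zero_le

lemma IsDiscreteChain.ae_tendsto_visits (hc : IsDiscreteChain Q X P) (j : S) :
    ∀ᵐ ω ∂Q, Tendsto (fun n : ℕ => visits X j n ω / n) atTop
      (𝓝 ((hasVisit X j 0).indicator (fun _ => limitFreq P j) ω)) := by
  have hiff : hitProb P j j = 1 ↔ ∑' u, ENNReal.ofReal (fpass P j u j) = 1 := by
    rw [hitProb_eq_toReal hc.nonneg hc.rowSum, ENNReal.toReal_eq_one_iff]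
  by_cases hF : ∑' u, ENNReal.ofReal (fpass P j u j) = 1
  · have hlf : limitFreq P j = 1 / (meanReturn P j).toReal := if_pos (hiff.2 hF)
    have h : ∀ᵐ ω ∂Q, ω ∈ hasVisit X j 0 → Tendsto (fun n : ℕ => visits X j n ω / n) atTop
        (𝓝 (limitFreq P j)) := by
      rcases eq_or_ne (Q (hasVisit X j 0)) 0 with h0 | h0
      · filter_upwards [measure_eq_zero_iff_ae_notMem.1 h0] with ω hω hmem
        exact absurd hmem hω
      · rw [hlf]
        exact hc.ae_tendsto_visits_of_recurrent hF h0
    filter_upwards [h] with ω hω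
    by_cases hmem : ω ∈ hasVisit X j 0
    · rw [Set.indicator_of_mem hmem]
      exact hω hmem
    · rw [Set.indicator_of_notMem hmem]
      exact tendsto_visits_of_notMem_hasVisit hmem
  · have hlf : limitFreq P j = 0 := if_neg fun h => hF (hiff.1 h)
    filter_upwards [hc.ae_exists_notMem_hasVisit hF] with ω ⟨k, hk⟩
    simpa [hlf] using tendsto_visits_of_notMem_hasVisit hk

lemma visits_div_mem_Icc {Ω : Type*} (X : ℕ → Ω → S) (j : S) (n : ℕ) (ω : Ω) :
    visits X j n ω / n ∈ Set.Icc (0 : ℝ) 1 := by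
  have h0 : 0 ≤ visits X j n ω := Finset.sum_nonneg fun k _ => by split_ifs <;> norm_num
  refine ⟨by positivity, div_le_one_of_le₀ ?_ (Nat.cast_nonneg n)⟩
  calc visits X j n ω ≤ ∑ k ∈ Finset.Icc 1 n, (1 : ℝ) :=
        Finset.sum_le_sum fun k _ => by split_ifs <;> norm_num
    _ = n := by simp

lemma average_eq_tsum_visits {Ω : Type*} (X : ℕ → Ω → S) (g : S → ℝ) (n : ℕ) (ω : Ω) :
    (1 / (n : ℝ)) * ∑ k ∈ Finset.Icc 1 n, g (X k ω) = ∑' j, g j * (visits X j n ω / n) := by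
  have h : ∀ k, g (X k ω) = ∑' j, g j * (if X k ω = j then 1 else 0) := by
    intro k
    rw [tsum_eq_single (X k ω) fun j hj => by simp [hj.symm]]
    simp
  have hs : ∀ k ∈ Finset.Icc 1 n, Summable fun j => g j * (if X k ω = j then (1 : ℝ) else 0) :=
    fun k _ => summable_of_ne_finset_zero (s := {X k ω}) fun j hj => by
      simp [Ne.symm (Finset.notMem_singleton.1 hj)]
  rw [Finset.sum_congr rfl fun k _ => h k, ← Summable.tsum_finsetSum hs, ← tsum_mul_left]
  refine tsum_congr fun j => ?_
  rw [visits, ← Finset.mul_sum]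
  ring

lemma IsDiscreteChain.ae_tendsto_average (hc : IsDiscreteChain Q X P) {g : S → ℝ}
    (hg : Summable fun i => |g i|) :
    ∀ᵐ ω ∂Q, Tendsto (fun n : ℕ => (1 / (n : ℝ)) * ∑ k ∈ Finset.Icc 1 n, g (X k ω)) atTop
      (𝓝 (∑' j : {j : S // PositiveRecurrent P j},
        ({ω' | ∃ l ≥ 1, X l ω' = j.1}).indicator
          (fun _ => g j.1 / (meanReturn P j.1).toReal) ω)) := by
  filter_upwards [ae_all_iff.2 hc.ae_tendsto_visits] with ω hω
  have hsum : (∑' j : {j : S // PositiveRecurrent P j},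
      ({ω' | ∃ l ≥ 1, X l ω' = j.1}).indicator
        (fun _ => g j.1 / (meanReturn P j.1).toReal) ω) =
      ∑' j, g j * (hasVisit X j 0).indicator (fun _ => limitFreq P j) ω := by
    refine (tsum_subtype {j : S | PositiveRecurrent P j} fun j =>
      ({ω' | ∃ l ≥ 1, X l ω' = j}).indicator
        (fun _ => g j / (meanReturn P j).toReal) ω).trans (tsum_congr fun j => ?_)
    have hset : {ω' | ∃ l ≥ 1, X l ω' = j} = hasVisit X j 0 :=
      Set.ext fun ω' => mem_hasVisit_zero_iff.symm
    by_cases hj : PositiveRecurrent P j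
    · rw [Set.indicator_of_mem (show j ∈ {j : S | PositiveRecurrent P j} from hj), hset,
        limitFreq_of_positiveRecurrent hj]
      by_cases hmem : ω ∈ hasVisit X j 0
      · rw [Set.indicator_of_mem hmem, Set.indicator_of_mem hmem, mul_one_div]
      · rw [Set.indicator_of_notMem hmem, Set.indicator_of_notMem hmem, mul_zero]
    · rw [Set.indicator_of_notMem (show j ∉ {j : S | PositiveRecurrent P j} from hj),
        limitFreq_of_not_positiveRecurrent hj]
      simp
  rw [hsum]
  simp_rw [average_eq_tsum_visits]
  refine tendsto_tsum_of_dominated_convergence hg (fun j => (hω j).const_mul (g j))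
    (Eventually.of_forall fun n j => ?_)
  have h := visits_div_mem_Icc X j n ω
  rw [norm_mul, Real.norm_eq_abs, Real.norm_eq_abs, abs_of_nonneg h.1]
  exact mul_le_of_le_one_right (abs_nonneg _) h.2

end Frequency

section Trace

lemma measure_inter_add_inter_le {Ω : Type*} [MeasurableSpace Ω] (μ : Measure Ω)
    [IsFiniteMeasure μ] {A B T : Set Ω} (hAB : μ A + μ B ≤ μ (A ∪ B)) :
    μ (T ∩ A) + μ (T ∩ B) ≤ μ T := by
  set A' := toMeasurable μ A with hA'
  set B' := toMeasurable μ B with hB'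
  have hA'm : MeasurableSet A' := measurableSet_toMeasurable μ A
  have hAA' : A ⊆ A' := subset_toMeasurable μ A
  have hBB' : B ⊆ B' := subset_toMeasurable μ B
  have hnull : μ (A' ∩ B') = 0 := by
    have h1 := measure_union_add_inter A' (measurableSet_toMeasurable μ B) (μ := μ)
    rw [← hB', hA', hB', measure_toMeasurable, measure_toMeasurable, ← hA', ← hB'] at h1
    have h2 : μ (A' ∪ B') + μ (A' ∩ B') ≤ μ (A' ∪ B') + 0 := by
      rw [h1, add_zero]
      exact hAB.trans (measure_mono (Set.union_subset_union hAA' hBB'))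
    exact le_antisymm ((ENNReal.add_le_add_iff_left (measure_ne_top μ _)).1 h2) zero_le
  have hB : μ (T ∩ B) ≤ μ (T \ A') := by
    calc μ (T ∩ B) ≤ μ (T \ A' ∪ A' ∩ B') := by
          refine measure_mono fun ω hω => ?_
          by_cases h : ω ∈ A'
          · exact Or.inr ⟨h, hBB' hω.2⟩
          · exact Or.inl ⟨hω.1, h⟩
      _ ≤ μ (T \ A') + μ (A' ∩ B') := measure_union_le _ _
      _ = μ (T \ A') := by rw [hnull, add_zero]
  rw [← measure_inter_add_sdiff T hA'm]
  exact add_le_add (measure_mono (Set.inter_subset_inter_right _ hAA')) hB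

variable {Ω : Type*} [MeasurableSpace Ω] [MeasurableSpace S] {μ : Measure Ω} {X : ℕ → Ω → S}
  {P : S → S → ℝ}

lemma tsum_ofReal_row {P : S → S → ℝ} (h0 : ∀ i j, 0 ≤ P i j) (h1 : ∀ i, ∑' j, P i j = 1)
    (i : S) : ∑' l, ENNReal.ofReal (P i l) = 1 := by
  rw [← ENNReal.ofReal_tsum_of_nonneg (h0 i) (summable_row h1 i), h1, ENNReal.ofReal_one]

lemma cylinder_inter_initial (X : ℕ → Ω → S) (a : S) (n : ℕ) (f : ℕ → S) :
    {ω | ∀ m ≤ n, X m ω = f m} ∩ {ω | X 0 ω = a} = {ω | ∀ m ≤ n, X m ω = f m} ∨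
      {ω | ∀ m ≤ n, X m ω = f m} ∩ {ω | X 0 ω = a} = ∅ := by
  by_cases h : f 0 = a
  · exact Or.inl (Set.inter_eq_left.2 fun ω hω => (hω 0 (Nat.zero_le n)).trans h)
  · refine Or.inr (Set.eq_empty_of_forall_notMem fun ω hω => h ?_)
    exact (hω.1 0 (Nat.zero_le n)).symm.trans hω.2

lemma markov_inter_initial (hMC : IsMarkovChain μ X P) (a : S) (n : ℕ) (l : S) (f : ℕ → S) :
    μ ({ω | X (n + 1) ω = l} ∩ {ω | ∀ m ≤ n, X m ω = f m} ∩ {ω | X 0 ω = a}) =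
      ENNReal.ofReal (P (f n) l) * μ ({ω | ∀ m ≤ n, X m ω = f m} ∩ {ω | X 0 ω = a}) := by
  rw [Set.inter_assoc]
  rcases cylinder_inter_initial X a n f with h | h
  · rw [h, hMC.markov]
  · simp [h]

lemma isCaratheodory_cylinder (hMC : IsMarkovChain μ X P) (a : S) (n : ℕ) (f : ℕ → S) :
    MeasurableSet[(OuterMeasure.restrict {ω | X 0 ω = a} μ.toOuterMeasure).caratheodory]
      {ω | ∀ m ≤ n, X m ω = f m} := by
  have := hMC.isProb
  induction n with
  | zero =>
    rw [OuterMeasure.isCaratheodory_iff_le]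
    intro T
    simp only [OuterMeasure.restrict_apply, Measure.coe_toOuterMeasure]
    by_cases h : f 0 = a
    · have h1 : (T \ {ω | ∀ m ≤ 0, X m ω = f m}) ∩ {ω | X 0 ω = a} = ∅ := by
        refine Set.eq_empty_of_forall_notMem fun ω hω => hω.1.2 fun m hm => ?_
        rw [Nat.le_zero.1 hm, h]
        exact hω.2
      rw [h1, measure_empty, add_zero]
      exact measure_mono (Set.inter_subset_inter_left _ Set.inter_subset_left)
    · have h1 : (T ∩ {ω | ∀ m ≤ 0, X m ω = f m}) ∩ {ω | X 0 ω = a} = ∅ :=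
        Set.eq_empty_of_forall_notMem fun ω hω => h ((hω.1.2 0 le_rfl).symm.trans hω.2)
      rw [h1, measure_empty, zero_add]
      exact measure_mono (Set.inter_subset_inter_left _ Set.sdiff_subset)
  | succ n ih =>
    rw [OuterMeasure.isCaratheodory_iff] at ih
    rw [OuterMeasure.isCaratheodory_iff_le]
    intro T
    rw [ih T]
    simp only [OuterMeasure.restrict_apply, Measure.coe_toOuterMeasure]
    set E : Set Ω := {ω | X 0 ω = a} with hE
    set C : Set Ω := {ω | ∀ m ≤ n, X m ω = f m} with hC
    set D : Set Ω := {ω | X (n + 1) ω = f (n + 1)} with hD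
    have hcyl : {ω | ∀ m ≤ n + 1, X m ω = f m} = D ∩ C := by
      ext ω
      constructor
      · exact fun h => ⟨h _ le_rfl, fun m hm => h m (hm.trans (Nat.le_succ n))⟩
      · rintro ⟨h1, h2⟩ m hm
        rcases Nat.le_succ_iff.1 hm with h | rfl
        · exact h2 m h
        · exact h1
    rw [hcyl]
    have hA : μ (D ∩ C ∩ E) = ENNReal.ofReal (P (f n) (f (n + 1))) * μ (C ∩ E) :=
      markov_inter_initial hMC a n _ f
    have hB : μ ((C \ D) ∩ E) ≤
        ∑' l, if l = f (n + 1) then 0 else ENNReal.ofReal (P (f n) l) * μ (C ∩ E) := by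
      calc μ ((C \ D) ∩ E)
          ≤ μ (⋃ l, if l = f (n + 1) then ∅ else {ω | X (n + 1) ω = l} ∩ C ∩ E) := by
            refine measure_mono fun ω hω => Set.mem_iUnion.2 ⟨X (n + 1) ω, ?_⟩
            rw [if_neg (show ¬ X (n + 1) ω = f (n + 1) from hω.1.2)]
            exact ⟨⟨rfl, hω.1.1⟩, hω.2⟩
        _ ≤ ∑' l, μ (if l = f (n + 1) then ∅ else {ω | X (n + 1) ω = l} ∩ C ∩ E) :=
            measure_iUnion_le _
        _ = _ := by
            refine tsum_congr fun l => ?_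
            split_ifs
            · exact measure_empty
            · exact markov_inter_initial hMC a n l f
    have hunion : D ∩ C ∩ E ∪ (C \ D) ∩ E = C ∩ E := by
      ext ω
      simp only [Set.mem_union, Set.mem_inter_iff, Set.mem_sdiff]
      tauto
    have hAB : μ (D ∩ C ∩ E) + μ ((C \ D) ∩ E) ≤ μ (D ∩ C ∩ E ∪ (C \ D) ∩ E) := by
      rw [hunion, hA]
      refine (add_le_add_right hB _).trans_eq ?_
      have hrow : ∑' l, ENNReal.ofReal (P (f n) l) * μ (C ∩ E) = μ (C ∩ E) := by
        rw [ENNReal.tsum_mul_right, tsum_ofReal_row hMC.nonneg hMC.rowSum, one_mul]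
      rw [ENNReal.tsum_eq_add_tsum_ite (f (n + 1))] at hrow
      convert hrow
    have hkey := measure_inter_add_inter_le μ hAB (T := T ∩ C ∩ E)
    calc μ (T ∩ (D ∩ C) ∩ E) + μ (T \ (D ∩ C) ∩ E)
        ≤ μ (T ∩ C ∩ E ∩ (D ∩ C ∩ E)) +
          (μ (T ∩ C ∩ E ∩ ((C \ D) ∩ E)) + μ (T \ C ∩ E)) := by
          refine add_le_add (measure_mono fun ω => ?_)
            ((measure_mono fun ω => ?_).trans (measure_union_le _ _))
          · simp only [Set.mem_inter_iff]
            tauto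
          · simp only [Set.mem_inter_iff, Set.mem_union, Set.mem_sdiff]
            tauto
      _ ≤ μ (T ∩ C ∩ E) + μ (T \ C ∩ E) := by
          rw [← add_assoc]
          exact add_le_add_left hkey _

/-- The trace of a Markov chain on a possibly nonmeasurable initial event `{X 0 = a}`, on which
the Markov property makes every event `{X n = j}` Carathéodory measurable. -/
lemma exists_isDiscreteChain_of_initial (hMC : IsMarkovChain μ X P) (a : S) :
    ∃ (σ : MeasurableSpace Ω) (Q : @Measure Ω σ), @IsFiniteMeasure Ω σ Q ∧
      @IsDiscreteChain S Ω σ Q X P ∧ ∀ B, μ (B ∩ {ω | X 0 ω = a}) ≤ Q B := by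
  have := hMC.isProb
  set ν := OuterMeasure.restrict {ω | X 0 ω = a} μ.toOuterMeasure with hν
  have hν_apply : ∀ B, ν B = μ (B ∩ {ω | X 0 ω = a}) := fun B => by
    rw [hν, OuterMeasure.restrict_apply, Measure.coe_toOuterMeasure]
  have hcyl := isCaratheodory_cylinder hMC a
  rw [← hν] at hcyl
  have hX : ∀ n j, MeasurableSet[ν.caratheodory] {ω | X n ω = j} := by
    intro n j
    have h : {ω | X n ω = j} = ⋃ g : Fin (n + 1) → S, {ω | X n ω = j} ∩
        {ω | ∀ m ≤ n, X m ω = (if h : m < n + 1 then g ⟨m, h⟩ else g 0)} := by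
      ext ω
      rw [Set.mem_iUnion]
      refine ⟨fun h => ⟨fun m => X m ω, h, fun m hm => ?_⟩, fun ⟨_, h⟩ => h.1⟩
      rw [dif_pos (Nat.lt_succ_of_le hm)]
    rw [h]
    refine @MeasurableSet.iUnion _ _ ν.caratheodory _ _ fun g => ?_
    by_cases hg : g (Fin.last n) = j
    · convert hcyl n (fun m => if h : m < n + 1 then g ⟨m, h⟩ else g 0) using 1
      refine Set.inter_eq_right.2 fun ω hω => ?_
      have := hω n le_rfl
      rw [dif_pos (Nat.lt_succ_self n)] at this
      exact this.trans hg
    · convert @MeasurableSet.empty _ ν.caratheodory using 1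
      refine Set.eq_empty_of_forall_notMem fun ω hω => hg ?_
      have := hω.2 n le_rfl
      rw [dif_pos (Nat.lt_succ_self n)] at this
      exact this.symm.trans hω.1
  have hfin : ν Set.univ < ⊤ := by
    rw [hν_apply]
    exact measure_lt_top μ _
  have hnonneg := hMC.nonneg
  have hrow := hMC.rowSum
  have hmarkov := markov_inter_initial hMC a
  simp only [← hν_apply] at hmarkov ⊢
  let σ : MeasurableSpace Ω := ν.caratheodory
  refine ⟨σ, ν.toMeasure le_rfl, ⟨?_⟩, ⟨hX, hnonneg, hrow, fun n l f => ?_⟩,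
    le_toMeasure_apply ν le_rfl⟩
  · rwa [toMeasure_apply ν le_rfl MeasurableSet.univ]
  · rw [toMeasure_apply ν le_rfl ((hX _ _).inter (hcyl n f)), toMeasure_apply ν le_rfl (hcyl n f)]
    exact hmarkov n l f

end Trace

end MarkovErgodic

/-- For absolutely summable `g`, almost surely the Cesàro averages of `g(X_k)` converge to
`∑_{j ∈ C} (g(j)/m_j) 1_{A^j}`, where `A^j` is the event that the chain ever visits `j`
and `C` is the set of positive recurrent states. -/
theorem cesaro_g_tendsto_ae
    {Ω : Type*} [MeasurableSpace Ω] [MeasurableSpace S] (μ : Measure Ω)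
    (X : ℕ → Ω → S) (P : S → S → ℝ) (hMC : IsMarkovChain μ X P)
    (g : S → ℝ) (hg : Summable fun i => |g i|) :
    ∀ᵐ ω ∂μ, Tendsto (fun n : ℕ => (1 / (n : ℝ)) * ∑ k ∈ Finset.Icc 1 n, g (X k ω))
      atTop
      (𝓝 (∑' j : {j : S // PositiveRecurrent P j},
        ({ω' | ∃ l ≥ 1, X l ω' = j.1}).indicator
          (fun _ => g j.1 / (meanReturn P j.1).toReal) ω)) := by
  rw [ae_iff]
  refine measure_mono_null (t := ⋃ a, {ω | ¬ Tendsto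
      (fun n : ℕ => (1 / (n : ℝ)) * ∑ k ∈ Finset.Icc 1 n, g (X k ω)) atTop
      (𝓝 (∑' j : {j : S // PositiveRecurrent P j},
        ({ω' | ∃ l ≥ 1, X l ω' = j.1}).indicator
          (fun _ => g j.1 / (meanReturn P j.1).toReal) ω))} ∩ {ω | X 0 ω = a})
    (fun ω hω => Set.mem_iUnion.2 ⟨X 0 ω, hω, rfl⟩) (measure_iUnion_null fun a => ?_)
  obtain ⟨σ, Q, hfin, hc, hle⟩ := MarkovErgodic.exists_isDiscreteChain_of_initial hMC a
  exact le_antisymm ((hle _).trans (ae_iff.1 (hc.ae_tendsto_average hg)).le) zero_le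
end
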